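/- Suppose α > β > 0 and I_sdp(α,β) > 1. Then, for (σ, ℋ) ∼ HSBM(n,p,q;k), the semidefinite program with input W = W(ℋ) has σσᵀ as its unique optimal solution (i.e. Σ̂(ℋ) = σσᵀ) with probability 1 − o(1) as n → ∞. -/

import Mathlib

open Finset Filter Matrix

open scoped Classical

/-- The `k`-element subsets of `[n]`, i.e. the potential hyperedges. -/
abbrev KSet (n k : ℕ) := {e : Finset (Fin n) // e.card = k}

/-- A `±1` label vector (encoded by `Bool`) is balanced if it has equally many
`+1`'s (`true`) and `-1`'s (`false`). -/
abbrev balanced {n : ℕ} (σ : Fin n → Bool) : Prop :=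
  2 * (Finset.univ.filter (fun i => σ i = true)).card = n

/-- `e` is in-cluster w.r.t. `σ`: `σ` is constant on `e`. -/
abbrev inCluster {n : ℕ} (σ : Fin n → Bool) (e : Finset (Fin n)) : Prop :=
  ∀ i ∈ e, ∀ j ∈ e, σ i = σ j

/-- Probability that `e` appears as an edge, given the labels `σ`. -/
noncomputable def edgeP {n : ℕ} (p q : ℝ) (σ : Fin n → Bool) (e : Finset (Fin n)) : ℝ :=
  if inCluster σ e then p else q

/-- Probability of observing exactly the hypergraph with edge-indicator `E`, given labels `σ`
(edges appear independently). -/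
noncomputable def hypProb {n k : ℕ} (p q : ℝ) (σ : Fin n → Bool) (E : KSet n k → Bool) : ℝ :=
  ∏ e : KSet n k, if E e then edgeP p q σ e.1 else 1 - edgeP p q σ e.1

/-- Uniform prior on balanced label vectors. -/
noncomputable def sigProb (n : ℕ) (σ : Fin n → Bool) : ℝ :=
  if balanced σ then 1 / ((Finset.univ.filter (fun τ : Fin n → Bool => balanced τ)).card : ℝ)
  else 0

/-- Probability of an event `P` under the joint law `HSBM(n,p,q;k)` of `(σ, ℋ)`. -/
noncomputable def prEvent (n k : ℕ) (p q : ℝ)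
    (P : (Fin n → Bool) → (KSet n k → Bool) → Prop) : ℝ :=
  ∑ σ : Fin n → Bool, ∑ E : KSet n k → Bool,
    sigProb n σ * hypProb p q σ E * (if P σ E then 1 else 0)

/-- Global sign flip. -/
def negB {n : ℕ} (σ : Fin n → Bool) : Fin n → Bool := fun i => !(σ i)

/-- The edge probability parameter `α · log n / C(n-1, k-1)`. -/
noncomputable def pParam (k : ℕ) (α : ℝ) (n : ℕ) : ℝ :=
  α * Real.log n / ((n - 1).choose (k - 1) : ℝ)

/-- The real `±1` vector associated to a Boolean label vector. -/
def sgn {n : ℕ} (σ : Fin n → Bool) : Fin n → ℝ := fun i => if σ i then 1 else -1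

/-- The rank-one matrix `σσᵀ`. -/
noncomputable def outer {n : ℕ} (σ : Fin n → Bool) : Matrix (Fin n) (Fin n) ℝ :=
  Matrix.of fun i j => sgn σ i * sgn σ j

/-- The weighted adjacency matrix `W(H)`: `W i j` is the number of hyperedges containing
both `i` and `j` (zero on the diagonal). -/
noncomputable def Wmat {n k : ℕ} (E : KSet n k → Bool) : Matrix (Fin n) (Fin n) ℝ :=
  Matrix.of fun i j => if i = j then 0 else
    ((Finset.univ.filter (fun e : KSet n k => E e = true ∧ i ∈ e.1 ∧ j ∈ e.1)).card : ℝ)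

/-- Feasibility for the SDP relaxation: `X ⪰ 0`, unit diagonal, `⟨X, 𝟙𝟙ᵀ⟩ = 0`. -/
def sdpFeasible {n : ℕ} (X : Matrix (Fin n) (Fin n) ℝ) : Prop :=
  X.PosSemidef ∧ (∀ i, X i i = 1) ∧ (∑ i, ∑ j, X i j) = 0

/-- The SDP objective `⟨W, X⟩`. -/
noncomputable def sdpObj {n : ℕ} (W X : Matrix (Fin n) (Fin n) ℝ) : ℝ :=
  ∑ i, ∑ j, W i j * X i j

/-- `Xs` is the unique optimal solution of the SDP with input `W`. -/
def sdpUniqueOpt {n : ℕ} (W Xs : Matrix (Fin n) (Fin n) ℝ) : Prop :=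
  sdpFeasible Xs ∧ ∀ X, sdpFeasible X → X ≠ Xs → sdpObj W X < sdpObj W Xs

/-- `Γ = diag(σ) W diag(σ)`. -/
noncomputable def GammaM {n : ℕ} (σ : Fin n → Bool) (W : Matrix (Fin n) (Fin n) ℝ) :
    Matrix (Fin n) (Fin n) ℝ :=
  Matrix.diagonal (sgn σ) * W * Matrix.diagonal (sgn σ)

/-- The Laplacian `L_Γ = diag(Γ𝟙) - Γ`. -/
noncomputable def LGamma {n : ℕ} (σ : Fin n → Bool) (W : Matrix (Fin n) (Fin n) ℝ) :
    Matrix (Fin n) (Fin n) ℝ :=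
  Matrix.diagonal (fun i => ∑ j, GammaM σ W i j) - GammaM σ W

/-- `Π = I - (1/n)𝟙𝟙ᵀ - (1/n)σσᵀ`, the projector onto `span{𝟙, σ}ᗮ`. -/
noncomputable def PiM {n : ℕ} (σ : Fin n → Bool) : Matrix (Fin n) (Fin n) ℝ :=
  1 - (n : ℝ)⁻¹ • Matrix.of (fun _ _ => (1 : ℝ)) - (n : ℝ)⁻¹ • outer σ

/-- The third-smallest eigenvalue of a symmetric matrix, via the Courant–Fischer
max–min characterization over subspaces of dimension `n - 2`. -/
noncomputable def lambda3 {n : ℕ} (M : Matrix (Fin n) (Fin n) ℝ) : ℝ :=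
  sSup {r : ℝ | ∃ V : Submodule ℝ (Fin n → ℝ), Module.finrank ℝ V = n - 2 ∧
    ∀ x ∈ V, r * (∑ i, x i ^ 2) ≤ x ⬝ᵥ M.mulVec x}



/-! ### Product Bernoulli weights -/

/-- Product Bernoulli weight. -/
noncomputable def wt {ι : Type} [Fintype ι] (P : ι → ℝ) (E : ι → Bool) : ℝ :=
  ∏ e, if E e then P e else 1 - P e

/-- Probability under the product Bernoulli weight. -/
noncomputable def prB {ι : Type} [Fintype ι] (P : ι → ℝ) (A : (ι → Bool) → Prop) : ℝ :=
  ∑ E : ι → Bool, wt P E * (if A E then 1 else 0)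

lemma wt_nonneg {ι : Type} [Fintype ι] {P : ι → ℝ} (h0 : ∀ e, 0 ≤ P e) (h1 : ∀ e, P e ≤ 1)
    (E : ι → Bool) : 0 ≤ wt P E := by
  unfold wt
  refine Finset.prod_nonneg fun e _ => ?_
  split_ifs
  · exact h0 e
  · linarith [h1 e]

lemma mgf_eq {ι : Type} [Fintype ι] (P c : ι → ℝ) :
    ∑ E : ι → Bool, wt P E * Real.exp (∑ e, if E e then c e else 0)
      = ∏ e, (1 + P e * (Real.exp (c e) - 1)) := by
  have h : ∀ e, (1 + P e * (Real.exp (c e) - 1))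
      = ∑ b : Bool, ((if b then P e else 1 - P e) * Real.exp (if b then c e else 0)) := by
    intro e
    simp
    ring
  simp_rw [h]
  rw [Finset.prod_univ_sum]
  simp only [Fintype.piFinset_univ]
  refine Finset.sum_congr rfl fun E _ => ?_
  rw [Finset.prod_mul_distrib, Real.exp_sum]
  rfl

lemma wt_sum {ι : Type} [Fintype ι] (P : ι → ℝ) : ∑ E : ι → Bool, wt P E = 1 := by
  have := mgf_eq P (fun _ => 0)
  simpa using this

lemma prB_mono {ι : Type} [Fintype ι] {P : ι → ℝ} (h0 : ∀ e, 0 ≤ P e) (h1 : ∀ e, P e ≤ 1)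
    {A B : (ι → Bool) → Prop} (h : ∀ E, A E → B E) : prB P A ≤ prB P B := by
  unfold prB
  refine Finset.sum_le_sum fun E _ => mul_le_mul_of_nonneg_left ?_ (wt_nonneg h0 h1 E)
  by_cases hA : A E
  · simp [hA, h E hA]
  · simp only [hA, if_false]
    split_ifs <;> norm_num

lemma prB_compl {ι : Type} [Fintype ι] (P : ι → ℝ) (A : (ι → Bool) → Prop) :
    prB P A = 1 - prB P (fun E => ¬ A E) := by
  unfold prB
  rw [eq_sub_iff_add_eq, ← Finset.sum_add_distrib]
  refine Eq.trans ?_ (wt_sum P)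
  refine Finset.sum_congr rfl fun E _ => ?_
  by_cases hA : A E <;> simp [hA]

lemma prB_nonneg {ι : Type} [Fintype ι] {P : ι → ℝ} (h0 : ∀ e, 0 ≤ P e) (h1 : ∀ e, P e ≤ 1)
    (A : (ι → Bool) → Prop) : 0 ≤ prB P A := by
  unfold prB
  refine Finset.sum_nonneg fun E _ => mul_nonneg (wt_nonneg h0 h1 E) ?_
  split_ifs <;> norm_num

lemma prB_or {ι : Type} [Fintype ι] {P : ι → ℝ} (h0 : ∀ e, 0 ≤ P e) (h1 : ∀ e, P e ≤ 1)
    (A B : (ι → Bool) → Prop) : prB P (fun E => A E ∨ B E) ≤ prB P A + prB P B := by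
  unfold prB
  rw [← Finset.sum_add_distrib]
  refine Finset.sum_le_sum fun E _ => ?_
  rw [← mul_add]
  refine mul_le_mul_of_nonneg_left ?_ (wt_nonneg h0 h1 E)
  by_cases hA : A E <;> by_cases hB : B E <;> simp [hA, hB]

lemma prB_exists {ι κ : Type} [Fintype ι] {P : ι → ℝ} (h0 : ∀ e, 0 ≤ P e) (h1 : ∀ e, P e ≤ 1)
    (s : Finset κ) (A : κ → (ι → Bool) → Prop) :
    prB P (fun E => ∃ a ∈ s, A a E) ≤ ∑ a ∈ s, prB P (A a) := by
  induction s using Finset.induction_on with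
  | empty => simp [prB]
  | insert a s ha ih =>
    rw [Finset.sum_insert ha]
    refine le_trans (le_trans (prB_mono h0 h1 ?_) (prB_or h0 h1 (A a) (fun E => ∃ a ∈ s, A a E)))
      (by linarith)
    intro E ⟨b, hb, hE⟩
    rcases Finset.mem_insert.1 hb with rfl | hb
    · exact Or.inl hE
    · exact Or.inr ⟨b, hb, hE⟩

lemma chern {ι : Type} [Fintype ι] {P : ι → ℝ} (h0 : ∀ e, 0 ≤ P e) (h1 : ∀ e, P e ≤ 1)
    (c : ι → ℝ) (t : ℝ) :
    prB P (fun E => t ≤ ∑ e, if E e then c e else 0)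
      ≤ Real.exp (∑ e, P e * (Real.exp (c e) - 1) - t) := by
  have hm : ∏ e, (1 + P e * (Real.exp (c e) - 1)) ≤ Real.exp (∑ e, P e * (Real.exp (c e) - 1)) := by
    rw [Real.exp_sum]
    refine Finset.prod_le_prod (fun e _ => ?_) (fun e _ => ?_)
    · nlinarith [h0 e, h1 e, Real.exp_pos (c e)]
    · linarith [Real.add_one_le_exp (P e * (Real.exp (c e) - 1))]
  rw [sub_eq_add_neg, Real.exp_add]
  refine le_trans ?_ (mul_le_mul_of_nonneg_right hm (Real.exp_pos _).le)
  rw [← mgf_eq, Finset.sum_mul]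
  unfold prB
  refine Finset.sum_le_sum fun E _ => ?_
  rw [mul_assoc]
  refine mul_le_mul_of_nonneg_left ?_ (wt_nonneg h0 h1 E)
  rw [← Real.exp_add]
  split_ifs with h
  · exact Real.one_le_exp (by linarith)
  · exact (Real.exp_pos _).le

/-! ### Pair sums over hyperedges -/

/-- Sum of a pair function over the ordered pairs of distinct elements of `e`. -/
noncomputable def SF {n : ℕ} (F : Fin n → Fin n → ℝ) (e : Finset (Fin n)) : ℝ :=
  ∑ i ∈ e, ∑ j ∈ e, if i = j then 0 else F i j

/-- Expected weighted adjacency matrix. -/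
noncomputable def EWm {n k : ℕ} (P : KSet n k → ℝ) (i j : Fin n) : ℝ :=
  if i = j then 0 else ∑ e : KSet n k, if i ∈ e.1 ∧ j ∈ e.1 then P e else 0

lemma SF_eq_univ {n : ℕ} (F : Fin n → Fin n → ℝ) (e : Finset (Fin n)) :
    SF F e = ∑ i, ∑ j, if i = j then 0 else if i ∈ e ∧ j ∈ e then F i j else 0 := by
  unfold SF
  rw [← Finset.sum_filter_add_sum_filter_not univ (fun i => i ∈ e)]
  have h2 : ∑ i with ¬ i ∈ e, ∑ j, (if i = j then 0 else if i ∈ e ∧ j ∈ e then F i j else 0) = 0 := by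
    refine Finset.sum_eq_zero fun i hi => Finset.sum_eq_zero fun j _ => ?_
    have := (Finset.mem_filter.1 hi).2
    simp [this]
  rw [h2, add_zero]
  have h3 : (univ.filter fun i => i ∈ e) = e := by ext; simp
  rw [h3]
  refine Finset.sum_congr rfl fun i hi => ?_
  rw [← Finset.sum_filter_add_sum_filter_not univ (fun i => i ∈ e), h3]
  have h4 : ∑ j with ¬ j ∈ e, (if i = j then 0 else if i ∈ e ∧ j ∈ e then F i j else 0) = 0 := by
    refine Finset.sum_eq_zero fun j hj => ?_
    have := (Finset.mem_filter.1 hj).2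
    simp [this]
  rw [h4, add_zero]
  refine Finset.sum_congr rfl fun j hj => ?_
  simp [hi, hj]

lemma EW_sum {n k : ℕ} (P : KSet n k → ℝ) (F : Fin n → Fin n → ℝ) :
    ∑ i, ∑ j, EWm P i j * F i j = ∑ e : KSet n k, P e * SF F e.1 := by
  simp_rw [SF_eq_univ, Finset.mul_sum]
  rw [Finset.sum_comm]
  rw [Finset.sum_comm (s := (univ : Finset (KSet n k)))]
  rw [Finset.sum_comm]
  refine Finset.sum_congr rfl fun i _ => ?_
  rw [Finset.sum_comm (s := (univ : Finset (KSet n k)))]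
  refine Finset.sum_congr rfl fun j _ => ?_
  unfold EWm
  split_ifs with h
  · simp
  · rw [Finset.sum_mul]
    refine Finset.sum_congr rfl fun e _ => ?_
    split_ifs <;> simp

lemma Wmat_eq {n k : ℕ} (E : KSet n k → Bool) (i j : Fin n) :
    Wmat E i j = EWm (fun e => if E e then 1 else 0) i j := by
  unfold Wmat EWm
  simp only [Matrix.of_apply]
  split_ifs with h
  · rfl
  · rw [Finset.card_filter]
    push_cast
    refine Finset.sum_congr rfl fun e _ => ?_
    by_cases h1 : E e = true <;> by_cases h2 : i ∈ e.1 ∧ j ∈ e.1 <;> simp [h1, h2]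

lemma W_sum {n k : ℕ} (E : KSet n k → Bool) (F : Fin n → Fin n → ℝ) :
    ∑ i, ∑ j, Wmat E i j * F i j = ∑ e : KSet n k, if E e then SF F e.1 else 0 := by
  simp_rw [Wmat_eq]
  rw [EW_sum]
  refine Finset.sum_congr rfl fun e _ => ?_
  split_ifs <;> simp

lemma EWm_nonneg {n k : ℕ} {P : KSet n k → ℝ} (h0 : ∀ e, 0 ≤ P e) (i j : Fin n) :
    0 ≤ EWm P i j := by
  unfold EWm
  split_ifs
  · exact le_rfl
  · refine Finset.sum_nonneg fun e _ => ?_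
    split_ifs
    · exact h0 e
    · exact le_rfl

lemma Wmat_nonneg {n k : ℕ} (E : KSet n k → Bool) (i j : Fin n) : 0 ≤ Wmat E i j := by
  rw [Wmat_eq]
  refine EWm_nonneg (fun e => ?_) i j
  split_ifs <;> norm_num

lemma EWm_symm {n k : ℕ} (P : KSet n k → ℝ) (i j : Fin n) : EWm P i j = EWm P j i := by
  unfold EWm
  by_cases h : i = j
  · simp [h]
  · simp only [h, Ne.symm h, if_false, and_comm]

lemma Wmat_symm {n k : ℕ} (E : KSet n k → Bool) (i j : Fin n) : Wmat E i j = Wmat E j i := by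
  rw [Wmat_eq, Wmat_eq, EWm_symm]

lemma SF_nonneg {n : ℕ} {F : Fin n → Fin n → ℝ} (hF : ∀ i j, 0 ≤ F i j) (e : Finset (Fin n)) :
    0 ≤ SF F e := by
  unfold SF
  refine Finset.sum_nonneg fun i _ => Finset.sum_nonneg fun j _ => ?_
  split_ifs
  · exact le_rfl
  · exact hF i j

lemma abs_SF_le {n : ℕ} {F : Fin n → Fin n → ℝ} {T : ℝ} (hF : ∀ i j, |F i j| ≤ T)
    (e : Finset (Fin n)) : |SF F e| ≤ (e.card : ℝ) ^ 2 * T := by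
  unfold SF
  refine (Finset.abs_sum_le_sum_abs _ _).trans ?_
  have : ∀ i ∈ e, |∑ j ∈ e, if i = j then 0 else F i j| ≤ e.card * T := by
    intro i _
    refine (Finset.abs_sum_le_sum_abs _ _).trans ?_
    rw [← nsmul_eq_mul]
    refine Finset.sum_le_card_nsmul _ _ _ fun j _ => ?_
    split_ifs
    · simpa using (abs_nonneg _).trans (hF i j)
    · exact hF i j
  refine (Finset.sum_le_card_nsmul _ _ _ this).trans ?_
  rw [nsmul_eq_mul]
  apply le_of_eq
  ring

lemma SF_sq_le {n : ℕ} (F : Fin n → Fin n → ℝ) (e : Finset (Fin n)) :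
    SF F e ^ 2 ≤ (e.card : ℝ) ^ 2 * SF (fun i j => F i j ^ 2) e := by
  unfold SF
  rw [← Finset.sum_product', ← Finset.sum_product']
  refine (sq_sum_le_card_mul_sum_sq).trans ?_
  rw [Finset.card_product]
  apply le_of_eq
  push_cast
  rw [sq]
  congr 1
  refine Finset.sum_congr rfl fun x _ => ?_
  split_ifs <;> simp

lemma sum_P_SF_le {n k : ℕ} {P : KSet n k → ℝ} {ρ : ℝ} (hρ : ∀ i j, EWm P i j ≤ ρ)
    {F : Fin n → Fin n → ℝ} (hF : ∀ i j, 0 ≤ F i j) :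
    ∑ e : KSet n k, P e * SF F e.1 ≤ ρ * ∑ i, ∑ j, F i j := by
  rw [← EW_sum, Finset.mul_sum]
  refine Finset.sum_le_sum fun i _ => ?_
  rw [Finset.mul_sum]
  exact Finset.sum_le_sum fun j _ => mul_le_mul_of_nonneg_right (hρ i j) (hF i j)

/-- Upper tail bound for nonnegative pair functions bounded by one. -/
lemma tail_nonneg {n k : ℕ} {P : KSet n k → ℝ} (h0 : ∀ e, 0 ≤ P e) (h1 : ∀ e, P e ≤ 1)
    {ρ : ℝ} (hρ : ∀ i j, EWm P i j ≤ ρ)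
    {F : Fin n → Fin n → ℝ} (hF : ∀ i j, 0 ≤ F i j) (hF1 : ∀ i j, F i j ≤ 1)
    {θ : ℝ} (hθ : 0 < θ) (t : ℝ) :
    prB P (fun E => t ≤ ∑ i, ∑ j, Wmat E i j * F i j)
      ≤ Real.exp (θ * Real.exp (θ * (k : ℝ) ^ 2) * (ρ * ∑ i, ∑ j, F i j) - θ * t) := by
  refine (prB_mono h0 h1 ?_).trans ((chern h0 h1 (fun e => θ * SF F e.1) (θ * t)).trans ?_)
  · intro E hE
    rw [W_sum] at hE
    refine (mul_le_mul_of_nonneg_left hE hθ.le).trans (le_of_eq ?_)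
    rw [Finset.mul_sum]
    refine Finset.sum_congr rfl fun e _ => ?_
    split_ifs <;> simp
  · refine Real.exp_le_exp.2 (sub_le_sub_right ?_ _)
    have hb : ∀ e : KSet n k, P e * (Real.exp (θ * SF F e.1) - 1)
        ≤ θ * Real.exp (θ * (k : ℝ) ^ 2) * (P e * SF F e.1) := by
      intro e
      have hs0 := SF_nonneg hF e.1
      have hs1 : SF F e.1 ≤ (k : ℝ) ^ 2 := by
        have := abs_SF_le (T := 1) (fun i j => by rw [abs_of_nonneg (hF i j)]; exact hF1 i j) e.1
        rw [e.2, mul_one] at this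
        exact (le_abs_self _).trans this
      have hx : Real.exp (θ * SF F e.1) - 1 ≤ θ * SF F e.1 * Real.exp (θ * SF F e.1) := by
        have := Real.add_one_le_exp (-(θ * SF F e.1))
        have hp := Real.exp_pos (θ * SF F e.1)
        have he : Real.exp (-(θ * SF F e.1)) * Real.exp (θ * SF F e.1) = 1 := by
          rw [← Real.exp_add]; simp
        nlinarith
      have hy : Real.exp (θ * SF F e.1) ≤ Real.exp (θ * (k : ℝ) ^ 2) :=
        Real.exp_le_exp.2 (mul_le_mul_of_nonneg_left hs1 hθ.le)
      have hz : Real.exp (θ * SF F e.1) - 1 ≤ θ * SF F e.1 * Real.exp (θ * (k : ℝ) ^ 2) :=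
        hx.trans (mul_le_mul_of_nonneg_left hy (by positivity))
      refine (mul_le_mul_of_nonneg_left hz (h0 e)).trans (le_of_eq (by ring))
    refine (Finset.sum_le_sum fun e _ => hb e).trans ?_
    rw [← Finset.mul_sum]
    exact mul_le_mul_of_nonneg_left (sum_P_SF_le hρ hF) (by positivity)

/-- Bernstein-type upper tail for bounded pair functions. -/
lemma tail_light {n k : ℕ} {P : KSet n k → ℝ} (h0 : ∀ e, 0 ≤ P e) (h1 : ∀ e, P e ≤ 1)
    {ρ : ℝ} (hρ : ∀ i j, EWm P i j ≤ ρ)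
    {F : Fin n → Fin n → ℝ} {T : ℝ} (hF : ∀ i j, |F i j| ≤ T)
    {θ : ℝ} (hθ : 0 < θ) (hT : θ * ((k : ℝ) ^ 2 * T) ≤ 1) (t : ℝ) :
    prB P (fun E => t ≤ ∑ i, ∑ j, (Wmat E i j - EWm P i j) * F i j)
      ≤ Real.exp (θ ^ 2 * (k : ℝ) ^ 2 * (ρ * ∑ i, ∑ j, F i j ^ 2) - θ * t) := by
  refine (prB_mono h0 h1 ?_).trans
    ((chern h0 h1 (fun e => θ * SF F e.1) (θ * (t + ∑ e : KSet n k, P e * SF F e.1))).trans ?_)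
  · intro E hE
    simp only [sub_mul, Finset.sum_sub_distrib] at hE
    rw [W_sum, EW_sum] at hE
    refine (mul_le_mul_of_nonneg_left (le_sub_iff_add_le.1 hE) hθ.le).trans (le_of_eq ?_)
    rw [Finset.mul_sum]
    refine Finset.sum_congr rfl fun e _ => ?_
    split_ifs <;> simp
  · refine Real.exp_le_exp.2 ?_
    have hb : ∀ e : KSet n k, P e * (Real.exp (θ * SF F e.1) - 1)
        ≤ θ * (P e * SF F e.1)
          + θ ^ 2 * (k : ℝ) ^ 2 * (P e * SF (fun i j => F i j ^ 2) e.1) := by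
      intro e
      have hs1 := abs_SF_le hF e.1
      have hs2 := SF_sq_le F e.1
      rw [e.2] at hs1 hs2
      have ha : |θ * SF F e.1| ≤ 1 := by
        rw [abs_mul, abs_of_pos hθ]
        exact (mul_le_mul_of_nonneg_left hs1 hθ.le).trans hT
      have hx := (abs_le.1 (Real.abs_exp_sub_one_sub_id_le ha)).2
      have hz : Real.exp (θ * SF F e.1) - 1
          ≤ θ * SF F e.1 + θ ^ 2 * ((k : ℝ) ^ 2 * SF (fun i j => F i j ^ 2) e.1) := by
        have := mul_le_mul_of_nonneg_left hs2 (sq_nonneg θ)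
        nlinarith
      refine (mul_le_mul_of_nonneg_left hz (h0 e)).trans (le_of_eq (by ring))
    have := Finset.sum_le_sum fun e (_ : e ∈ (univ : Finset (KSet n k))) => hb e
    rw [Finset.sum_add_distrib, ← Finset.mul_sum, ← Finset.mul_sum] at this
    have h2 := sum_P_SF_le hρ (F := fun i j => F i j ^ 2) (fun i j => sq_nonneg _)
    have h3 := mul_le_mul_of_nonneg_left h2 (show 0 ≤ θ ^ 2 * (k : ℝ) ^ 2 by positivity)
    linarith


/-! ### Deterministic lemmas -/

lemma quad_affine {n : ℕ} (M : Fin n → Fin n → ℝ) (hM : ∀ i, M i i = 0) (y : Fin n → ℝ)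
    (a : Fin n) : ∃ c l : ℝ, ∀ t : ℝ,
      ∑ i, ∑ j, M i j * (Function.update y a t i * Function.update y a t j) = c + l * t := by
  set d : Fin n → ℝ := fun i => if i = a then 1 else 0 with hd
  set y0 : Fin n → ℝ := Function.update y a 0 with hy0
  have hu : ∀ t i, Function.update y a t i = y0 i + t * d i := by
    intro t i
    by_cases h : i = a
    · subst h; simp [hd, hy0]
    · simp [hd, hy0, h]
  have hdd : ∑ i, ∑ j, M i j * (d i * d j) = 0 := by
    simp [hd, hM]
  refine ⟨∑ i, ∑ j, M i j * (y0 i * y0 j), ∑ i, ∑ j, M i j * (d i * y0 j + y0 i * d j), ?_⟩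
  intro t
  have : ∑ i, ∑ j, M i j * (Function.update y a t i * Function.update y a t j)
      = ∑ i, ∑ j, M i j * (y0 i * y0 j) + (∑ i, ∑ j, M i j * (d i * y0 j + y0 i * d j)) * t
        + (∑ i, ∑ j, M i j * (d i * d j)) * t ^ 2 := by
    simp only [Finset.sum_mul, ← Finset.sum_add_distrib]
    refine Finset.sum_congr rfl fun i _ => Finset.sum_congr rfl fun j _ => ?_
    rw [hu, hu]; ring
  rw [this, hdd]; ring

lemma quad_round_aux {n : ℕ} (M : Fin n → Fin n → ℝ) (hM : ∀ i, M i i = 0) (x : Fin n → ℝ)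
    (s : Finset (Fin n)) : ∃ y : Fin n → ℝ, (∀ i ∉ s, y i = x i) ∧
      (∀ i ∈ s, ∃ z : ℤ, y i = z ∧ |(z : ℝ) - x i| ≤ 1) ∧
      ∑ i, ∑ j, M i j * (x i * x j) ≤ ∑ i, ∑ j, M i j * (y i * y j) := by
  induction s using Finset.induction_on with
  | empty => exact ⟨x, by simp, by simp, le_rfl⟩
  | insert a s ha ih =>
    obtain ⟨y, hy1, hy2, hy3⟩ := ih
    obtain ⟨c, l, hcl⟩ := quad_affine M hM y a
    have hcur := hcl (y a)
    rw [Function.update_eq_self] at hcur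
    have key : ∃ z : ℤ, |(z : ℝ) - x a| ≤ 1 ∧ l * y a ≤ l * z := by
      rw [hy1 a ha]
      rcases le_total 0 l with hl | hl
      · refine ⟨⌈x a⌉, ?_, mul_le_mul_of_nonneg_left (Int.le_ceil _) hl⟩
        rw [abs_le]
        constructor <;> linarith [Int.le_ceil (x a), Int.ceil_lt_add_one (x a)]
      · refine ⟨⌊x a⌋, ?_, mul_le_mul_of_nonpos_left (Int.floor_le _) hl⟩
        rw [abs_le]
        constructor <;> linarith [Int.floor_le (x a), Int.lt_floor_add_one (x a)]
    obtain ⟨z, hz1, hz2⟩ := key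
    refine ⟨Function.update y a z, ?_, ?_, ?_⟩
    · intro i hi
      rw [Finset.mem_insert, not_or] at hi
      rw [Function.update_of_ne hi.1]
      exact hy1 i hi.2
    · intro i hi
      by_cases h : i = a
      · subst h
        exact ⟨z, by simp, hz1⟩
      · rw [Function.update_of_ne h]
        exact hy2 i ((Finset.mem_insert.1 hi).resolve_left h)
    · rw [hcl]
      linarith

lemma quad_round {n : ℕ} (M : Fin n → Fin n → ℝ) (hM : ∀ i, M i i = 0) (x : Fin n → ℝ) :
    ∃ z : Fin n → ℤ, (∀ i, |(z i : ℝ) - x i| ≤ 1) ∧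
      ∑ i, ∑ j, M i j * (x i * x j) ≤ ∑ i, ∑ j, M i j * ((z i : ℝ) * z j) := by
  obtain ⟨y, -, hy2, hy3⟩ := quad_round_aux M hM x univ
  choose z hz using fun i => hy2 i (mem_univ i)
  refine ⟨z, fun i => (hz i).2, ?_⟩
  simpa only [fun i => (hz i).1] using hy3

/-- Quadratic form bound on integer vectors gives the bound on all real vectors. -/
lemma quad_int_to_real {n : ℕ} (hn : 0 < n) (M : Fin n → Fin n → ℝ) (hM : ∀ i, M i i = 0)
    (K : ℝ) (h : ∀ z : Fin n → ℤ, ∑ i, (z i : ℝ) ^ 2 ≤ 4 * n →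
      ∑ i, ∑ j, M i j * ((z i : ℝ) * z j) ≤ K * n) (y : Fin n → ℝ) :
    ∑ i, ∑ j, M i j * (y i * y j) ≤ K * ∑ i, y i ^ 2 := by
  have hn' : (0 : ℝ) < n := by exact_mod_cast hn
  set N := ∑ i, y i ^ 2 with hN
  have hN0 : 0 ≤ N := Finset.sum_nonneg fun i _ => sq_nonneg _
  rcases hN0.eq_or_lt with h0 | hpos
  · have hy : ∀ i, y i = 0 := by
      intro i
      have := (Finset.sum_eq_zero_iff_of_nonneg (fun i _ => sq_nonneg (y i))).1 h0.symm i (mem_univ i)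
      exact pow_eq_zero_iff (two_ne_zero) |>.1 this
    simp [hy, ← h0]
  · set r := Real.sqrt (n / N) with hr
    have hr2 : r ^ 2 = n / N := Real.sq_sqrt (by positivity)
    obtain ⟨z, hz1, hz2⟩ := quad_round M hM (fun i => r * y i)
    have hzs : ∑ i, (z i : ℝ) ^ 2 ≤ 4 * n := by
      have : ∀ i ∈ (univ : Finset (Fin n)), (z i : ℝ) ^ 2 ≤ 2 * (r ^ 2 * y i ^ 2) + 2 := by
        intro i _
        have := abs_le.1 (hz1 i)
        nlinarith [sq_nonneg ((z i : ℝ) - 2 * (r * y i))]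
      refine (Finset.sum_le_sum this).trans (le_of_eq ?_)
      rw [Finset.sum_add_distrib, ← Finset.mul_sum, ← Finset.mul_sum, ← hN, hr2]
      simp only [Finset.sum_const, Finset.card_univ, Fintype.card_fin, nsmul_eq_mul]
      field_simp
      ring
    have h1 := hz2.trans (h z hzs)
    have h2 : ∑ i, ∑ j, M i j * (r * y i * (r * y j)) = r ^ 2 * ∑ i, ∑ j, M i j * (y i * y j) := by
      simp only [Finset.mul_sum]
      refine Finset.sum_congr rfl fun i _ => Finset.sum_congr rfl fun j _ => ?_
      ring
    rw [h2, hr2, div_mul_eq_mul_div, div_le_iff₀ hpos] at h1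
    have : (n : ℝ) * ∑ i, ∑ j, M i j * (y i * y j) ≤ n * (K * N) := by linarith
    exact le_of_mul_le_mul_left this hn'

lemma layer {n : ℕ} (M : Fin n → Fin n → ℝ) (m : Fin n → ℕ) (A : Finset (Fin n)) (K : ℝ)
    (h : ∀ T ⊆ A, ∑ i ∈ T, ∑ j ∈ T, M i j ≤ K * T.card) :
    ∑ i ∈ A, ∑ j ∈ A, M i j * ((min (m i) (m j) : ℕ) : ℝ) ≤ K * ∑ i ∈ A, (m i : ℝ) := by
  set N := ∑ i, m i with hN
  have hmN : ∀ i, m i ≤ N := fun i => Finset.single_le_sum (fun _ _ => Nat.zero_le _) (mem_univ i)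
  have hc : ∀ t : ℕ, t ≤ N → (t : ℝ) = ∑ s ∈ range N, if s < t then (1 : ℝ) else 0 := by
    intro t ht
    rw [← Finset.sum_filter, Finset.sum_const, nsmul_eq_mul, mul_one]
    have : (range N).filter (fun s => s < t) = range t := by
      ext s; simp; omega
    rw [this, card_range]
  have h1 : ∑ i ∈ A, ∑ j ∈ A, M i j * ((min (m i) (m j) : ℕ) : ℝ)
      = ∑ s ∈ range N, ∑ i ∈ A.filter (fun i => s < m i), ∑ j ∈ A.filter (fun i => s < m i), M i j := by
    have : ∀ i j, M i j * ((min (m i) (m j) : ℕ) : ℝ)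
        = ∑ s ∈ range N, if s < m i then (if s < m j then M i j else 0) else 0 := by
      intro i j
      rw [hc _ ((min_le_left _ _).trans (hmN i)), Finset.mul_sum]
      refine Finset.sum_congr rfl fun s _ => ?_
      by_cases h1 : s < m i <;> by_cases h2 : s < m j <;> simp [h1, h2]
    simp_rw [this]
    rw [Finset.sum_congr rfl fun i _ => Finset.sum_comm, Finset.sum_comm]
    refine Finset.sum_congr rfl fun s _ => ?_
    rw [Finset.sum_filter]
    refine Finset.sum_congr rfl fun i _ => ?_
    split_ifs
    · rw [Finset.sum_filter]
    · simp
  rw [h1]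
  refine (Finset.sum_le_sum fun s _ => h _ (Finset.filter_subset _ _)).trans (le_of_eq ?_)
  rw [← Finset.mul_sum]
  congr 1
  rw [Finset.sum_congr rfl fun i _ => hc (m i) (hmN i), Finset.sum_comm]
  refine Finset.sum_congr rfl fun s _ => ?_
  rw [Finset.card_filter]
  push_cast
  rfl

lemma heavy_pt (a b T δ : ℝ) (hT : 0 < T) (hδ : 0 < δ) (h : T < |a * b|) :
    |a * b| ≤ δ * (a ^ 2 + b ^ 2)
      + (if T * δ ≤ a ^ 2 ∧ T * δ ≤ b ^ 2 then δ⁻¹ * min (a ^ 2) (b ^ 2) else 0) := by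
  rw [abs_mul] at h ⊢
  rw [← sq_abs a, ← sq_abs b]
  have ha := abs_nonneg a
  have hb := abs_nonneg b
  generalize |a| = x at *
  generalize |b| = y at *
  have hx : 0 < x := by
    rcases ha.eq_or_lt with h' | h'
    · rw [← h'] at h; linarith
    · exact h'
  have hy : 0 < y := by
    rcases hb.eq_or_lt with h' | h'
    · rw [← h'] at h; linarith
    · exact h'
  split_ifs with hc
  · have e1 : x * y ≤ δ * x ^ 2 + δ⁻¹ * y ^ 2 := by
      have : 0 ≤ δ⁻¹ * (δ * x - y) ^ 2 := by positivity
      have e : δ⁻¹ * (δ * x - y) ^ 2 = δ * x ^ 2 - 2 * (x * y) + δ⁻¹ * y ^ 2 := by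
        field_simp
        ring
      nlinarith [mul_pos hx hy]
    have e2 : x * y ≤ δ * y ^ 2 + δ⁻¹ * x ^ 2 := by
      have : 0 ≤ δ⁻¹ * (δ * y - x) ^ 2 := by positivity
      have e : δ⁻¹ * (δ * y - x) ^ 2 = δ * y ^ 2 - 2 * (x * y) + δ⁻¹ * x ^ 2 := by
        field_simp
        ring
      nlinarith [mul_pos hx hy]
    have := mul_nonneg hδ.le (sq_nonneg x)
    have := mul_nonneg hδ.le (sq_nonneg y)
    rcases min_choice (x ^ 2) (y ^ 2) with hm | hm <;> rw [hm] <;> nlinarith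
  · rw [not_and_or, not_le, not_le] at hc
    rw [add_zero]
    rcases hc with hc | hc
    · have : x * x < x * (δ * y) := by nlinarith
      have h2 : x < δ * y := lt_of_mul_lt_mul_left this hx.le
      nlinarith [mul_nonneg hδ.le (sq_nonneg x)]
    · have : y * y < y * (δ * x) := by nlinarith
      have h2 : y < δ * x := lt_of_mul_lt_mul_left this hy.le
      nlinarith [mul_nonneg hδ.le (sq_nonneg y)]

/-- Deterministic light/heavy decomposition bound. -/
lemma quad_bound {n : ℕ} (W EW : Fin n → Fin n → ℝ) (hW0 : ∀ i j, 0 ≤ W i j)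
    (hWs : ∀ i j, W i j = W j i)
    (hE0 : ∀ i j, 0 ≤ EW i j) {ρ : ℝ} (hρ : ∀ i j, EW i j ≤ ρ) (hρ0 : 0 ≤ ρ)
    (z : Fin n → ℤ) {R T δ Dg η L : ℝ} (hT : 0 < T) (hδ : 0 < δ) (hDg : 0 ≤ Dg) (hη : 0 ≤ η)
    (hz : ∑ i, (z i : ℝ) ^ 2 ≤ R)
    (hdeg : ∀ i, ∑ j, W i j ≤ Dg)
    (hsp : ∀ A : Finset (Fin n), (A.card : ℝ) * (T * δ) ≤ R → ∑ i ∈ A, ∑ j ∈ A, W i j ≤ η * A.card)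
    (hl : ∑ i, ∑ j, (W i j - EW i j) *
      (if |(z i : ℝ) * z j| ≤ T then (z i : ℝ) * z j else 0) ≤ L) :
    ∑ i, ∑ j, (W i j - EW i j) * ((z i : ℝ) * z j)
      ≤ L + 2 * δ * Dg * R + δ⁻¹ * η * R + ρ * R ^ 2 / T := by
  have hR : 0 ≤ R := le_trans (Finset.sum_nonneg fun i _ => sq_nonneg _) hz
  set A : Finset (Fin n) := univ.filter (fun i => T * δ ≤ (z i : ℝ) ^ 2) with hA
  have hAz : ∑ i ∈ A, (z i : ℝ) ^ 2 ≤ R :=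
    (Finset.sum_le_sum_of_subset_of_nonneg (Finset.subset_univ A)
      (fun i _ _ => sq_nonneg _)).trans hz
  have hAc : (A.card : ℝ) * (T * δ) ≤ R := by
    rw [← nsmul_eq_mul]
    refine (Finset.card_nsmul_le_sum A (fun i => (z i : ℝ) ^ 2) _ ?_).trans hAz
    intro i hi
    exact (Finset.mem_filter.1 hi).2
  -- layered sum
  have hlay : ∑ i ∈ A, ∑ j ∈ A, W i j * min ((z i : ℝ) ^ 2) ((z j : ℝ) ^ 2) ≤ η * R := by
    have := layer W (fun i => (z i).natAbs ^ 2) A η (fun T' hT' => hsp T' (by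
      refine le_trans (mul_le_mul_of_nonneg_right ?_ (by positivity)) hAc
      exact_mod_cast Finset.card_le_card hT'))
    have hc : ∀ i, (((z i).natAbs ^ 2 : ℕ) : ℝ) = (z i : ℝ) ^ 2 := by
      intro i
      rw [Nat.cast_pow, Nat.cast_natAbs, Int.cast_abs, sq_abs]
    simp only [Nat.cast_min, hc] at this
    exact this.trans (mul_le_mul_of_nonneg_left hAz hη)
  have hd1 : ∑ i, ∑ j, W i j * (z i : ℝ) ^ 2 ≤ Dg * R := by
    refine le_trans ?_ (mul_le_mul_of_nonneg_left hz hDg)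
    rw [Finset.mul_sum]
    refine Finset.sum_le_sum fun i _ => ?_
    rw [← Finset.sum_mul]
    exact mul_le_mul_of_nonneg_right (hdeg i) (sq_nonneg _)
  have hd2 : ∑ i, ∑ j, W i j * (z j : ℝ) ^ 2 ≤ Dg * R := by
    rw [Finset.sum_comm]
    simpa only [fun i j => hWs i j] using hd1
  have hrr : ∑ i, ∑ j, (z i : ℝ) ^ 2 * (z j : ℝ) ^ 2 ≤ R ^ 2 := by
    rw [← Finset.sum_mul_sum, sq]
    exact mul_le_mul hz hz (Finset.sum_nonneg fun i _ => sq_nonneg _) hR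
  -- pointwise
  have hpt : ∀ i j, (W i j - EW i j) * ((z i : ℝ) * z j)
      ≤ (W i j - EW i j) * (if |(z i : ℝ) * z j| ≤ T then (z i : ℝ) * z j else 0)
        + (δ * (W i j * (z i : ℝ) ^ 2) + δ * (W i j * (z j : ℝ) ^ 2)
        + δ⁻¹ * (if i ∈ A then (if j ∈ A then W i j * min ((z i : ℝ) ^ 2) ((z j : ℝ) ^ 2) else 0) else 0)
        + ρ / T * ((z i : ℝ) ^ 2 * (z j : ℝ) ^ 2)) := by
    intro i j
    have hw := hW0 i j
    have hm : 0 ≤ (if i ∈ A then (if j ∈ A then W i j * min ((z i : ℝ) ^ 2) ((z j : ℝ) ^ 2) else 0)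
        else 0) := by
      split_ifs <;> first | exact le_rfl | positivity
    by_cases hcase : |(z i : ℝ) * z j| ≤ T
    · rw [if_pos hcase]
      have : 0 ≤ δ * (W i j * (z i : ℝ) ^ 2) + δ * (W i j * (z j : ℝ) ^ 2)
        + δ⁻¹ * (if i ∈ A then (if j ∈ A then W i j * min ((z i : ℝ) ^ 2) ((z j : ℝ) ^ 2) else 0) else 0)
        + ρ / T * ((z i : ℝ) ^ 2 * (z j : ℝ) ^ 2) := by positivity
      linarith
    · rw [if_neg hcase, mul_zero, zero_add]
      have hlt := not_le.1 hcase
      have hh := heavy_pt _ _ T δ hT hδ hlt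
      have h1 : W i j * ((z i : ℝ) * z j) ≤ W i j * |(z i : ℝ) * z j| :=
        mul_le_mul_of_nonneg_left (le_abs_self _) hw
      have h2 := mul_le_mul_of_nonneg_left hh hw
      have h3 : W i j * (if T * δ ≤ (z i : ℝ) ^ 2 ∧ T * δ ≤ (z j : ℝ) ^ 2 then
            δ⁻¹ * min ((z i : ℝ) ^ 2) ((z j : ℝ) ^ 2) else 0)
          = δ⁻¹ * (if i ∈ A then (if j ∈ A then W i j * min ((z i : ℝ) ^ 2) ((z j : ℝ) ^ 2) else 0)
            else 0) := by
        by_cases c1 : T * δ ≤ (z i : ℝ) ^ 2 <;> by_cases c2 : T * δ ≤ (z j : ℝ) ^ 2 <;>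
          simp [hA, c1, c2] <;> ring
      have h4 : -(EW i j * ((z i : ℝ) * z j)) ≤ ρ / T * ((z i : ℝ) ^ 2 * (z j : ℝ) ^ 2) := by
        have e1 : -(EW i j * ((z i : ℝ) * z j)) ≤ EW i j * |(z i : ℝ) * z j| := by
          rw [← mul_neg]
          exact mul_le_mul_of_nonneg_left (neg_le_abs _) (hE0 i j)
        have e2 : |(z i : ℝ) * z j| ≤ (z i : ℝ) ^ 2 * (z j : ℝ) ^ 2 / T := by
          rw [le_div_iff₀ hT, ← mul_pow, ← sq_abs, sq]
          exact mul_le_mul_of_nonneg_left hlt.le (abs_nonneg _)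
        calc _ ≤ EW i j * |(z i : ℝ) * z j| := e1
          _ ≤ ρ * ((z i : ℝ) ^ 2 * (z j : ℝ) ^ 2 / T) :=
            mul_le_mul (hρ i j) e2 (abs_nonneg _) hρ0
          _ = _ := by ring
      rw [mul_add, h3] at h2
      linarith
  refine (Finset.sum_le_sum fun i _ => Finset.sum_le_sum fun j _ => hpt i j).trans ?_
  simp only [Finset.sum_add_distrib, ← Finset.mul_sum]
  have hAA : ∑ i, ∑ j, (if i ∈ A then (if j ∈ A then
      W i j * min ((z i : ℝ) ^ 2) ((z j : ℝ) ^ 2) else 0) else 0)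
      = ∑ i ∈ A, ∑ j ∈ A, W i j * min ((z i : ℝ) ^ 2) ((z j : ℝ) ^ 2) := by
    rw [← Finset.sum_filter_add_sum_filter_not univ (fun i => i ∈ A)]
    have h3 : (univ.filter fun i => i ∈ A) = A := by ext; simp
    rw [h3, Finset.sum_eq_zero (s := univ.filter fun i => ¬ i ∈ A), add_zero]
    · refine Finset.sum_congr rfl fun i hi => ?_
      simp only [hi, if_true]
      rw [← Finset.sum_filter, h3]
    · intro i hi
      simp [(Finset.mem_filter.1 hi).2]
  rw [hAA]
  have q1 := mul_le_mul_of_nonneg_left hd1 hδ.le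
  have q2 := mul_le_mul_of_nonneg_left hd2 hδ.le
  have q3 := mul_le_mul_of_nonneg_left hlay (inv_nonneg.2 hδ.le)
  have q4 := mul_le_mul_of_nonneg_left hrr (div_nonneg hρ0 hT.le)
  simp only [Finset.mul_sum] at q1 q2 q3 q4 hl ⊢
  have : ρ * R ^ 2 / T = ρ / T * R ^ 2 := by ring
  rw [this]
  linarith

/-! ### Dual certificate -/

section
open scoped MatrixOrder ComplexOrder

lemma posSemidef_gram {n : ℕ} {X : Matrix (Fin n) (Fin n) ℝ} (hX : X.PosSemidef) :
    ∃ B : Matrix (Fin n) (Fin n) ℝ, X = Bᴴ * B := by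
  obtain ⟨B, hB⟩ := CStarAlgebra.nonneg_iff_eq_star_mul_self.mp hX.nonneg
  exact ⟨B, hB⟩

end

lemma sgn_sq {n : ℕ} (σ : Fin n → Bool) (i : Fin n) : sgn σ i * sgn σ i = 1 := by
  unfold sgn
  split_ifs <;> norm_num

lemma outer_feasible {n : ℕ} (σ : Fin n → Bool) (hs : ∑ i, sgn σ i = 0) :
    sdpFeasible (outer σ) := by
  refine ⟨?_, fun i => sgn_sq σ i, ?_⟩
  · have : outer σ = Matrix.vecMulVec (sgn σ) (star (sgn σ)) := by
      ext i j; simp [outer, Matrix.vecMulVec]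
    rw [this]
    exact Matrix.posSemidef_vecMulVec_self_star _
  · simp only [outer, Matrix.of_apply]
    rw [← Finset.sum_mul_sum, hs, zero_mul]

lemma sdp_det {n : ℕ} (hn : 0 < n) (σ : Fin n → Bool) (hs : ∑ i, sgn σ i = 0)
    (W : Matrix (Fin n) (Fin n) ℝ) (hWs : ∀ i j, W i j = W j i) {ε₁ ε₂ : ℝ} (hε : ε₂ < ε₁)
    (hD : ∀ i, ε₁ ≤ ∑ j, W i j * (sgn σ i * sgn σ j))
    (hQ : ∀ w : Fin n → ℝ, ∑ i, w i = 0 → ∑ i, sgn σ i * w i = 0 →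
      ∑ i, ∑ j, W i j * (w i * w j) ≤ ε₂ * ∑ i, w i ^ 2) :
    sdpUniqueOpt W (outer σ) := by
  refine ⟨outer_feasible σ hs, ?_⟩
  intro X ⟨hX, hdiag, hsum⟩ hne
  have hn' : (n : ℝ) ≠ 0 := by exact_mod_cast hn.ne'
  obtain ⟨B, hB⟩ : ∃ B : Matrix (Fin n) (Fin n) ℝ, X = Bᴴ * B := by
    exact posSemidef_gram hX
  have hXe : ∀ i j, X i j = ∑ r, B r i * B r j := by
    intro i j; rw [hB]; simp [Matrix.mul_apply]
  set s := sgn σ with hsdef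
  set c : Fin n → ℝ := fun r => (∑ i, s i * B r i) / n with hc
  set w : Fin n → Fin n → ℝ := fun r i => B r i - c r * s i with hw
  have hss : ∑ i, s i * s i = n := by
    simp [hsdef, sgn_sq]
  have hB1 : ∀ r, ∑ i, B r i = 0 := by
    have h1 : ∑ r, (∑ i, B r i) ^ 2 = 0 := by
      rw [← hsum]
      simp_rw [hXe, sq, Finset.sum_mul_sum]
      rw [Finset.sum_comm]
      refine Finset.sum_congr rfl fun i _ => ?_
      rw [Finset.sum_comm]
    intro r
    have := (Finset.sum_eq_zero_iff_of_nonneg (fun r _ => sq_nonneg (∑ i, B r i))).1 h1 r (mem_univ r)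
    exact pow_eq_zero_iff (two_ne_zero) |>.1 this
  have hw1 : ∀ r, ∑ i, w r i = 0 := by
    intro r
    simp only [hw, Finset.sum_sub_distrib, ← Finset.mul_sum, hs, hB1, mul_zero, sub_zero]
  have hw2 : ∀ r, ∑ i, s i * w r i = 0 := by
    intro r
    have : ∑ i, s i * w r i = ∑ i, s i * B r i - c r * ∑ i, s i * s i := by
      rw [Finset.mul_sum, ← Finset.sum_sub_distrib]
      refine Finset.sum_congr rfl fun i _ => ?_
      simp only [hw]; ring
    rw [this, hss, hc]
    field_simp
    ring
  set D : Fin n → ℝ := fun i => ∑ j, W i j * (s i * s j) with hDdef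
  have hDs : ∀ i, D i * s i = ∑ j, W i j * s j := by
    intro i
    simp only [hDdef, Finset.sum_mul]
    refine Finset.sum_congr rfl fun j _ => ?_
    have := sgn_sq σ i
    rw [← hsdef] at this
    linear_combination (W i j * s j) * this
  -- per-row identity
  have hrow : ∀ r, ∑ i, D i * (B r i * B r i) - ∑ i, ∑ j, W i j * (B r i * B r j)
      = ∑ i, D i * (w r i * w r i) - ∑ i, ∑ j, W i j * (w r i * w r j) := by
    intro r
    have hBw : ∀ i, B r i = w r i + c r * s i := by intro i; simp only [hw]; ring
    have e1 : ∑ i, D i * (B r i * B r i) = ∑ i, D i * (w r i * w r i)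
        + 2 * c r * (∑ i, w r i * (D i * s i)) + c r ^ 2 * ∑ i, s i * (D i * s i) := by
      rw [Finset.mul_sum, Finset.mul_sum, ← Finset.sum_add_distrib, ← Finset.sum_add_distrib]
      refine Finset.sum_congr rfl fun i _ => ?_
      rw [hBw]; ring
    have e2 : ∑ i, ∑ j, W i j * (B r i * B r j) = ∑ i, ∑ j, W i j * (w r i * w r j)
        + c r * (∑ i, w r i * ∑ j, W i j * s j) + c r * (∑ i, s i * ∑ j, W i j * w r j)
        + c r ^ 2 * ∑ i, s i * ∑ j, W i j * s j := by
      simp only [Finset.mul_sum, ← Finset.sum_add_distrib]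
      refine Finset.sum_congr rfl fun i _ => Finset.sum_congr rfl fun j _ => ?_
      rw [hBw i, hBw j]; ring
    have e3 : ∑ i, s i * ∑ j, W i j * w r j = ∑ i, w r i * ∑ j, W i j * s j := by
      simp only [Finset.mul_sum]
      rw [Finset.sum_comm]
      refine Finset.sum_congr rfl fun i _ => Finset.sum_congr rfl fun j _ => ?_
      rw [hWs j i]; ring
    rw [e1, e2, e3]
    simp only [hDs]
    ring
  have hgap : sdpObj W (outer σ) - sdpObj W X
      = ∑ r, (∑ i, D i * (w r i * w r i) - ∑ i, ∑ j, W i j * (w r i * w r j)) := by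
    simp only [← hrow]
    rw [Finset.sum_sub_distrib]
    congr 1
    · have hr : ∑ r, ∑ i, D i * (B r i * B r i) = ∑ i, ∑ r, D i * (B r i * B r i) :=
        Finset.sum_comm
      rw [hr]
      unfold sdpObj
      refine Finset.sum_congr rfl fun i _ => ?_
      rw [← Finset.mul_sum, ← hXe, hdiag, mul_one]
      rfl
    · have hr : ∑ r, ∑ i, ∑ j, W i j * (B r i * B r j) = ∑ i, ∑ r, ∑ j, W i j * (B r i * B r j) :=
        Finset.sum_comm
      rw [hr]
      unfold sdpObj
      refine Finset.sum_congr rfl fun i _ => ?_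
      rw [Finset.sum_comm]
      refine Finset.sum_congr rfl fun j _ => ?_
      rw [hXe, Finset.mul_sum]
  have hlow : ∀ r, (ε₁ - ε₂) * ∑ i, w r i ^ 2
      ≤ ∑ i, D i * (w r i * w r i) - ∑ i, ∑ j, W i j * (w r i * w r j) := by
    intro r
    have h1 := hQ (w r) (hw1 r) (hw2 r)
    have h2 : ε₁ * ∑ i, w r i ^ 2 ≤ ∑ i, D i * (w r i * w r i) := by
      rw [Finset.mul_sum]
      refine Finset.sum_le_sum fun i _ => ?_
      rw [← sq]
      exact mul_le_mul_of_nonneg_right (hD i) (sq_nonneg _)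
    linarith
  have hex : ∃ r, 0 < ∑ i, w r i ^ 2 := by
    by_contra hcon
    push Not at hcon
    have hw0 : ∀ r i, w r i = 0 := by
      intro r i
      have h1 : ∑ i, w r i ^ 2 = 0 := le_antisymm (hcon r) (Finset.sum_nonneg fun i _ => sq_nonneg _)
      have := (Finset.sum_eq_zero_iff_of_nonneg (fun i _ => sq_nonneg (w r i))).1 h1 i (mem_univ i)
      exact pow_eq_zero_iff (two_ne_zero) |>.1 this
    have hBe : ∀ r i, B r i = c r * s i := fun r i => by
      have := hw0 r i
      simp only [hw] at this
      linarith
    have hXc : ∀ i j, X i j = (∑ r, c r ^ 2) * (s i * s j) := by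
      intro i j
      rw [hXe, Finset.sum_mul]
      refine Finset.sum_congr rfl fun r _ => ?_
      rw [hBe, hBe]; ring
    apply hne
    ext i j
    have h1 := hXc i i
    have h2 := sgn_sq σ i
    rw [← hsdef] at h2
    rw [hdiag, h2, mul_one] at h1
    rw [hXc, ← h1, one_mul]
    rfl
  obtain ⟨r₀, hr₀⟩ := hex
  have hpos : 0 < sdpObj W (outer σ) - sdpObj W X := by
    rw [hgap]
    refine Finset.sum_pos' (fun r _ => le_trans ?_ (hlow r)) ⟨r₀, mem_univ _, lt_of_lt_of_le ?_ (hlow r₀)⟩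
    · exact mul_nonneg (by linarith) (Finset.sum_nonneg fun i _ => sq_nonneg _)
    · exact mul_pos (by linarith) hr₀
  linarith


/-! ### Counting -/

lemma ksum {n k : ℕ} (s U : Finset (Fin n)) (hsU : s ⊆ U) (hs : s.card ≤ k)
    (g : Finset (Fin n) → ℝ) :
    ∑ e : KSet n k, (if s ⊆ e.1 ∧ e.1 ⊆ U then g e.1 else 0)
      = ∑ A ∈ powersetCard (k - s.card) (U \ s), g (A ∪ s) := by
  have h1 : ∑ e : KSet n k, (if s ⊆ e.1 ∧ e.1 ⊆ U then g e.1 else 0)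
      = ∑ e ∈ (powersetCard k (univ : Finset (Fin n))), (if s ⊆ e ∧ e ⊆ U then g e else 0) := by
    symm
    refine Finset.sum_subtype _ (fun e => ?_) _
    simp [Finset.mem_powersetCard]
  rw [h1, ← Finset.sum_filter]
  refine Finset.sum_bij' (fun e _ => e \ s) (fun A _ => A ∪ s) ?_ ?_ ?_ ?_ ?_
  · intro e he
    simp only [Finset.mem_filter, Finset.mem_powersetCard] at he ⊢
    refine ⟨Finset.sdiff_subset_sdiff he.2.2 (Finset.Subset.refl _), ?_⟩
    rw [Finset.card_sdiff_of_subset he.2.1, he.1.2]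
  · intro A hA
    simp only [Finset.mem_filter, Finset.mem_powersetCard] at hA ⊢
    have hd : Disjoint A s := Finset.disjoint_of_subset_left hA.1 Finset.sdiff_disjoint
    refine ⟨⟨Finset.subset_univ _, ?_⟩, Finset.subset_union_right, ?_⟩
    · rw [Finset.card_union_of_disjoint hd, hA.2]; omega
    · exact Finset.union_subset (hA.1.trans Finset.sdiff_subset) hsU
  · intro e he
    simp only [Finset.mem_filter, Finset.mem_powersetCard] at he
    exact Finset.sdiff_union_of_subset he.2.1
  · intro A hA
    simp only [Finset.mem_powersetCard] at hA
    have hd : Disjoint A s := Finset.disjoint_of_subset_left hA.1 Finset.sdiff_disjoint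
    exact Finset.union_sdiff_cancel_right hd
  · intro e he
    simp only [Finset.mem_filter, Finset.mem_powersetCard] at he
    rw [Finset.sdiff_union_of_subset he.2.1]

lemma kcount {n k : ℕ} (s U : Finset (Fin n)) (hsU : s ⊆ U) (hs : s.card ≤ k) :
    ∑ e : KSet n k, (if s ⊆ e.1 ∧ e.1 ⊆ U then (1 : ℝ) else 0)
      = ((U.card - s.card).choose (k - s.card) : ℕ) := by
  rw [ksum s U hsU hs (fun _ => 1), Finset.sum_const, Finset.card_powersetCard,
    Finset.card_sdiff_of_subset hsU, nsmul_eq_mul, mul_one]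

/-- The cluster of `i`. -/
noncomputable def clus {n : ℕ} (σ : Fin n → Bool) (i : Fin n) : Finset (Fin n) :=
  univ.filter fun j => σ j = σ i

lemma clus_card {m : ℕ} (σ : Fin (2 * m) → Bool) (h : balanced σ) (i : Fin (2 * m)) :
    (clus σ i).card = m := by
  unfold balanced at h
  have h2 := Finset.card_filter_add_card_filter_not (s := (univ : Finset (Fin (2 * m))))
    (fun i => σ i = true)
  rw [Finset.card_univ, Fintype.card_fin] at h2
  unfold clus
  cases hi : σ i
  · have : (univ.filter fun j => σ j = false) = univ.filter fun j => ¬ σ j = true := by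
      ext j; simp
    rw [this]
    omega
  · omega

lemma inCluster_iff {n : ℕ} (σ : Fin n → Bool) (e : Finset (Fin n)) (i : Fin n) (hi : i ∈ e) :
    inCluster σ e ↔ e ⊆ clus σ i := by
  constructor
  · intro h j hj
    simp only [clus, Finset.mem_filter, Finset.mem_univ, true_and]
    exact h j hj i hi
  · intro h a ha b hb
    have h1 := h ha
    have h2 := h hb
    simp only [clus, Finset.mem_filter, Finset.mem_univ, true_and] at h1 h2
    rw [h1, h2]

lemma edgeP_eq {n : ℕ} (p q : ℝ) (σ : Fin n → Bool) (e : Finset (Fin n)) (i : Fin n) (hi : i ∈ e) :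
    edgeP p q σ e = q + (p - q) * (if e ⊆ clus σ i then 1 else 0) := by
  unfold edgeP
  by_cases h : inCluster σ e
  · rw [if_pos h, if_pos ((inCluster_iff σ e i hi).1 h)]; ring
  · rw [if_neg h, if_neg (fun h' => h ((inCluster_iff σ e i hi).2 h'))]; ring

lemma EW_formula {m k : ℕ} (hk : 2 ≤ k) (p q : ℝ) (σ : Fin (2 * m) → Bool) (hb : balanced σ)
    (i j : Fin (2 * m)) (hij : i ≠ j) :
    EWm (fun e : KSet (2 * m) k => edgeP p q σ e.1) i j
      = q * ((2 * m - 2).choose (k - 2) : ℕ)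
        + (if σ i = σ j then (p - q) * ((m - 2).choose (k - 2) : ℕ) else 0) := by
  unfold EWm
  rw [if_neg hij]
  have hcard : ({i, j} : Finset (Fin (2 * m))).card = 2 := Finset.card_pair hij
  have h1 : ∀ e : KSet (2 * m) k, (if i ∈ e.1 ∧ j ∈ e.1 then edgeP p q σ e.1 else 0)
      = q * (if ({i, j} : Finset (Fin (2 * m))) ⊆ e.1 ∧ e.1 ⊆ univ then 1 else 0)
        + (p - q) * (if ({i, j} : Finset (Fin (2 * m))) ⊆ e.1 ∧ e.1 ⊆ clus σ i then 1 else 0) := by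
    intro e
    have : ({i, j} : Finset (Fin (2 * m))) ⊆ e.1 ↔ i ∈ e.1 ∧ j ∈ e.1 := by
      simp [Finset.insert_subset_iff]
    by_cases h : i ∈ e.1 ∧ j ∈ e.1
    · rw [if_pos h, edgeP_eq p q σ e.1 i h.1]
      simp only [this, h, Finset.subset_univ, and_self, if_true, true_and]
      ring
    · rw [if_neg h]
      simp [this, h]
  rw [Finset.sum_congr rfl fun e _ => h1 e, Finset.sum_add_distrib, ← Finset.mul_sum,
    ← Finset.mul_sum, kcount _ _ (Finset.subset_univ _) (by omega), Finset.card_univ,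
    Fintype.card_fin, hcard]
  congr 1
  split_ifs with h
  · rw [kcount _ _ ?_ (by omega), clus_card σ hb, hcard]
    intro a ha
    simp only [Finset.mem_insert, Finset.mem_singleton] at ha
    rcases ha with rfl | rfl
    · simp [clus]
    · simp [clus, h]
  · rw [Finset.sum_eq_zero, mul_zero]
    intro e _
    rw [if_neg]
    rintro ⟨h2, h3⟩
    have : j ∈ clus σ i := h3 (h2 (by simp))
    simp only [clus, Finset.mem_filter, Finset.mem_univ, true_and] at this
    exact h this.symm

lemma sgn_sum {m : ℕ} (σ : Fin (2 * m) → Bool) (h : balanced σ) : ∑ i, sgn σ i = 0 := by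
  have h2 := Finset.card_filter_add_card_filter_not (s := (univ : Finset (Fin (2 * m))))
    (fun i => σ i = true)
  rw [Finset.card_univ, Fintype.card_fin] at h2
  unfold balanced at h
  unfold sgn
  rw [Finset.sum_ite]
  simp only [Finset.sum_const, nsmul_eq_mul, mul_one, mul_neg]
  have : (univ.filter fun i => σ i = true).card = (univ.filter fun i => ¬ σ i = true).card := by omega
  rw [this]; ring

lemma EW_quad_nonpos {m k : ℕ} (hk : 2 ≤ k) {p q : ℝ} (hq : 0 ≤ q) (hpq : q ≤ p)
    (σ : Fin (2 * m) → Bool) (hb : balanced σ) (w : Fin (2 * m) → ℝ) (h1 : ∑ i, w i = 0)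
    (h2 : ∑ i, sgn σ i * w i = 0) :
    ∑ i, ∑ j, EWm (fun e : KSet (2 * m) k => edgeP p q σ e.1) i j * (w i * w j) ≤ 0 := by
  set b : ℝ := q * ((2 * m - 2).choose (k - 2) : ℕ) with hbdef
  set a : ℝ := (p - q) * ((m - 2).choose (k - 2) : ℕ) with hadef
  have hb0 : 0 ≤ b := mul_nonneg hq (Nat.cast_nonneg _)
  have ha0 : 0 ≤ a := mul_nonneg (by linarith) (Nat.cast_nonneg _)
  have hpt : ∀ i j, EWm (fun e : KSet (2 * m) k => edgeP p q σ e.1) i j * (w i * w j)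
      = b * (w i * w j) + a / 2 * (w i * w j) + a / 2 * ((sgn σ i * w i) * (sgn σ j * w j))
        - (if i = j then (a + b) * w i ^ 2 else 0) := by
    intro i j
    by_cases hij : i = j
    · subst hij
      have := sgn_sq σ i
      have h0 : EWm (fun e : KSet (2 * m) k => edgeP p q σ e.1) i i = 0 := by simp [EWm]
      rw [h0, if_pos rfl]
      linear_combination (- (a / 2 * w i ^ 2)) * this
    · rw [EW_formula hk p q σ hb i j hij, if_neg hij, ← hbdef, ← hadef]
      unfold sgn
      cases σ i <;> cases σ j <;> simp <;> ring
  rw [Finset.sum_congr rfl fun i _ => Finset.sum_congr rfl fun j _ => hpt i j]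
  simp only [Finset.sum_sub_distrib, Finset.sum_add_distrib, ← Finset.mul_sum, h1, h2]
  simp only [Finset.sum_ite_eq, Finset.mem_univ, if_true, mul_zero, Finset.sum_const_zero]
  have : 0 ≤ ∑ x, (a + b) * w x ^ 2 :=
    Finset.sum_nonneg fun i _ => mul_nonneg (by linarith) (sq_nonneg _)
  linarith

lemma EW_le {m k : ℕ} (hk : 2 ≤ k) {p q : ℝ} (hq : 0 ≤ q) (hpq : q ≤ p)
    (σ : Fin (2 * m) → Bool) (hb : balanced σ) (i j : Fin (2 * m)) :
    EWm (fun e : KSet (2 * m) k => edgeP p q σ e.1) i j ≤ p * ((2 * m - 2).choose (k - 2) : ℕ) := by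
  by_cases hij : i = j
  · have h0 : EWm (fun e : KSet (2 * m) k => edgeP p q σ e.1) i j = 0 := by simp [EWm, hij]
    rw [h0]
    exact mul_nonneg (by linarith) (Nat.cast_nonneg _)
  · rw [EW_formula hk p q σ hb i j hij]
    have : (((m - 2).choose (k - 2) : ℕ) : ℝ) ≤ ((2 * m - 2).choose (k - 2) : ℕ) := by
      exact_mod_cast Nat.choose_le_choose _ (by omega)
    have h3 := mul_le_mul_of_nonneg_left this (show 0 ≤ p - q by linarith)
    have h4 : (0 : ℝ) ≤ (p - q) * ((2 * m - 2).choose (k - 2) : ℕ) :=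
      mul_nonneg (by linarith) (Nat.cast_nonneg _)
    split_ifs <;> linarith

/-- Elementary symmetric polynomial bound. -/
lemma esymm_le {ι : Type} (y : ι → ℝ) (hy : ∀ i, 0 ≤ y i) (s : Finset ι) (r : ℕ) :
    ∑ A ∈ powersetCard r s, ∏ j ∈ A, y j ≤ (∑ j ∈ s, y j) ^ r / (r.factorial : ℝ) := by
  induction s using Finset.induction_on generalizing r with
  | empty =>
    cases r with
    | zero => simp
    | succ r =>
      have : powersetCard (r + 1) (∅ : Finset ι) = ∅ := Finset.powersetCard_eq_empty.2 (by simp)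
      rw [this]; simp
  | insert a s ha ih =>
    cases r with
    | zero => simp
    | succ r =>
      rw [Finset.powersetCard_succ_insert ha, Finset.sum_union, Finset.sum_image,
        Finset.sum_insert ha]
      · have h1 : ∑ A ∈ powersetCard r s, ∏ j ∈ insert a A, y j
            = y a * ∑ A ∈ powersetCard r s, ∏ j ∈ A, y j := by
          rw [Finset.mul_sum]
          refine Finset.sum_congr rfl fun A hA => ?_
          rw [Finset.prod_insert]
          exact fun h => ha ((Finset.mem_powersetCard.1 hA).1 h)
        rw [h1]
        have hS : 0 ≤ ∑ j ∈ s, y j := Finset.sum_nonneg fun j _ => hy j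
        set S := ∑ j ∈ s, y j
        have h2 := ih (r + 1)
        have h3 := mul_le_mul_of_nonneg_left (ih r) (hy a)
        have hpow : S ^ (r + 1) + (r + 1) * y a * S ^ r ≤ (y a + S) ^ (r + 1) := by
          have hb := hy a
          clear_value S
          generalize y a = b at *
          clear h1 h2 h3 ih
          induction r with
          | zero => simp; linarith
          | succ r ih2 =>
            have e : (b + S) ^ (r + 1 + 1) = (b + S) ^ (r + 1) * (b + S) := pow_succ _ _
            have := mul_le_mul_of_nonneg_right ih2 (show 0 ≤ b + S by linarith)
            rw [e]
            refine le_trans ?_ this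
            push_cast
            have : 0 ≤ ((r : ℝ) + 1) * b * S ^ r * b := by positivity
            ring_nf at this ⊢
            linarith
        refine (add_le_add h2 h3).trans ?_
        rw [Nat.factorial_succ]
        push_cast
        have hf : (0 : ℝ) < (r.factorial : ℝ) := by exact_mod_cast Nat.factorial_pos r
        have hr : (0 : ℝ) < (r : ℝ) + 1 := by positivity
        rw [le_div_iff₀ (by positivity)]
        refine le_trans (le_of_eq ?_) hpow
        field_simp
      · intro A hA B hB hAB
        have hA' : a ∉ A := fun h => ha ((Finset.mem_powersetCard.1 hA).1 h)
        have hB' : a ∉ B := fun h => ha ((Finset.mem_powersetCard.1 hB).1 h)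
        rw [← Finset.erase_insert hA', ← Finset.erase_insert hB', hAB]
      · rw [Finset.disjoint_left]
        intro A hA hA2
        obtain ⟨B, _, rfl⟩ := Finset.mem_image.1 hA2
        exact ha ((Finset.mem_powersetCard.1 hA).1 (Finset.mem_insert_self _ _))

lemma SF_row {n : ℕ} (f : Fin n → ℝ) (i : Fin n) (e : Finset (Fin n)) (hi : i ∈ e) :
    SF (fun a j => if a = i then f j else 0) e = ∑ j ∈ e \ {i}, f j := by
  unfold SF
  rw [Finset.sum_eq_single i]
  · rw [Finset.sdiff_singleton_eq_erase, ← Finset.add_sum_erase _ _ hi]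
    simp only [if_true, zero_add]
    refine Finset.sum_congr rfl fun j hj => ?_
    rw [if_neg (Finset.ne_of_mem_erase hj).symm]
  · intro b _ hb
    simp [hb]
  · intro h; exact absurd hi h

lemma SF_row_zero {n : ℕ} (f : Fin n → ℝ) (i : Fin n) (e : Finset (Fin n)) (hi : i ∉ e) :
    SF (fun a j => if a = i then f j else 0) e = 0 := by
  unfold SF
  refine Finset.sum_eq_zero fun a ha => Finset.sum_eq_zero fun j _ => ?_
  have : a ≠ i := fun h => hi (h ▸ ha)
  simp [this]

/-- Log-mgf bound of the signed degree of a vertex. -/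
lemma mgf_deg {m k : ℕ} (hk : 2 ≤ k) {p q : ℝ} (hq : 0 ≤ q)
    (σ : Fin (2 * m) → Bool) (hb : balanced σ) (i : Fin (2 * m)) (θ : ℝ) :
    ∑ e : KSet (2 * m) k, edgeP p q σ e.1 *
        (Real.exp (-θ * SF (fun a j => if a = i then sgn σ i * sgn σ j else 0) e.1) - 1)
      ≤ q * ((2 * m * Real.cosh θ) ^ (k - 1) / ((k - 1).factorial : ℝ)
            - ((2 * m - 1).choose (k - 1) : ℕ))
        + (p - q) * (((m - 1).choose (k - 1) : ℕ) * (Real.exp (-(θ * (k - 1 : ℕ))) - 1)) := by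
  set y : Fin (2 * m) → ℝ := fun j => Real.exp (-θ * (sgn σ i * sgn σ j)) with hy
  have hci : ({i} : Finset (Fin (2 * m))).card = 1 := Finset.card_singleton i
  have hterm : ∀ e : KSet (2 * m) k, edgeP p q σ e.1 *
        (Real.exp (-θ * SF (fun a j => if a = i then sgn σ i * sgn σ j else 0) e.1) - 1)
      = q * (if {i} ⊆ e.1 ∧ e.1 ⊆ univ then ∏ j ∈ e.1 \ {i}, y j else 0)
        - q * (if {i} ⊆ e.1 ∧ e.1 ⊆ univ then 1 else 0)
        + (p - q) * ((if {i} ⊆ e.1 ∧ e.1 ⊆ clus σ i then 1 else 0)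
            * (Real.exp (-(θ * (k - 1 : ℕ))) - 1)) := by
    intro e
    by_cases hi : i ∈ e.1
    · rw [SF_row _ i e.1 hi, edgeP_eq p q σ e.1 i hi]
      have hprod : Real.exp (-θ * ∑ j ∈ e.1 \ {i}, sgn σ i * sgn σ j) = ∏ j ∈ e.1 \ {i}, y j := by
        rw [Finset.mul_sum, Real.exp_sum]
      simp only [Finset.singleton_subset_iff, hi, Finset.subset_univ, and_self, if_true, true_and,
        hprod]
      split_ifs with hcl
      · have : ∏ j ∈ e.1 \ {i}, y j = Real.exp (-(θ * (k - 1 : ℕ))) := by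
          rw [← hprod]
          congr 1
          have h1 : ∀ j ∈ e.1 \ {i}, sgn σ i * sgn σ j = 1 := by
            intro j hj
            have := hcl (Finset.mem_sdiff.1 hj).1
            simp only [clus, Finset.mem_filter, Finset.mem_univ, true_and] at this
            have h2 := sgn_sq σ i
            unfold sgn at h2 ⊢
            rw [this]; exact h2
          rw [Finset.sum_congr rfl h1, Finset.sum_const,
            Finset.card_sdiff_of_subset (Finset.singleton_subset_iff.2 hi), e.2, hci]
          simp
        rw [this]; ring
      · ring
    · rw [SF_row_zero _ i e.1 hi]
      simp [hi]
  rw [Finset.sum_congr rfl fun e _ => hterm e, Finset.sum_add_distrib, Finset.sum_sub_distrib]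
  rw [← Finset.mul_sum, ← Finset.mul_sum, ← Finset.mul_sum, ← Finset.sum_mul]
  rw [kcount {i} _ (Finset.subset_univ _) (by rw [hci]; omega),
    kcount {i} (clus σ i) (by simp [clus]) (by rw [hci]; omega), clus_card σ hb, hci,
    Finset.card_univ, Fintype.card_fin,
    ksum {i} univ (Finset.subset_univ _) (by rw [hci]; omega) (fun e => ∏ j ∈ e \ {i}, y j), hci]
  have hA : ∑ A ∈ powersetCard (k - 1) (univ \ {i}), ∏ j ∈ (A ∪ {i}) \ {i}, y j
      = ∑ A ∈ powersetCard (k - 1) (univ \ {i}), ∏ j ∈ A, y j := by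
    refine Finset.sum_congr rfl fun A hA => ?_
    rw [Finset.union_sdiff_cancel_right]
    exact Finset.disjoint_of_subset_left (Finset.mem_powersetCard.1 hA).1 Finset.sdiff_disjoint
  rw [hA]
  have hy0 : ∀ j, 0 ≤ y j := fun j => (Real.exp_pos _).le
  have hS : ∑ j ∈ univ \ {i}, y j ≤ 2 * m * Real.cosh θ := by
    have h1 : ∑ j ∈ univ \ {i}, y j ≤ ∑ j, y j :=
      Finset.sum_le_sum_of_subset_of_nonneg (Finset.subset_univ _) fun j _ _ => hy0 j
    refine h1.trans (le_of_eq ?_)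
    have h2 : ∀ j, y j = Real.cosh θ - Real.sinh θ * (sgn σ i * sgn σ j) := by
      intro j
      simp only [hy]
      unfold sgn
      rw [Real.cosh_eq, Real.sinh_eq]
      cases σ i <;> cases σ j <;> simp <;> ring
    simp only [h2, Finset.sum_sub_distrib, ← Finset.mul_sum, sgn_sum σ hb]
    simp
  have h5 := esymm_le y hy0 (univ \ {i}) (k - 1)
  have h6 : (∑ j ∈ univ \ {i}, y j) ^ (k - 1) / ((k - 1).factorial : ℝ)
      ≤ (2 * m * Real.cosh θ) ^ (k - 1) / ((k - 1).factorial : ℝ) := by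
    refine div_le_div_of_nonneg_right ?_ (Nat.cast_nonneg _)
    exact pow_le_pow_left₀ (Finset.sum_nonneg fun j _ => hy0 j) hS _
  have h7 := mul_le_mul_of_nonneg_left (h5.trans h6) hq
  linarith


/-! ### Union bounds -/

lemma row_sum {n : ℕ} (W : Fin n → Fin n → ℝ) (f : Fin n → ℝ) (i : Fin n) :
    ∑ a, ∑ j, W a j * (if a = i then f j else 0) = ∑ j, W i j * f j := by
  rw [Finset.sum_eq_single i]
  · simp
  · intro b _ hb; simp [hb]
  · intro h; exact absurd (mem_univ i) h

lemma bad_deg {n k : ℕ} {P : KSet n k → ℝ} (h0 : ∀ e, 0 ≤ P e) (h1 : ∀ e, P e ≤ 1)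
    {C1 d : ℝ} (hn : (0 : ℝ) < n) (hd : Real.exp d = n)
    (hρ : ∀ i j, EWm P i j ≤ C1 * d / n) :
    prB P (fun E => ∃ i, (C1 * Real.exp ((k : ℝ) ^ 2) + 2) * d ≤ ∑ j, Wmat E i j)
      ≤ Real.exp (-d) := by
  have h2 : ∀ i, prB P (fun E => (C1 * Real.exp ((k : ℝ) ^ 2) + 2) * d ≤ ∑ j, Wmat E i j)
      ≤ Real.exp (-(2 * d)) := by
    intro i
    have ht := tail_nonneg h0 h1 hρ (F := fun a _ => if a = i then (1 : ℝ) else 0)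
      (fun a j => by split_ifs <;> norm_num)
      (fun a j => by split_ifs <;> norm_num)
      (θ := 1) one_pos ((C1 * Real.exp ((k : ℝ) ^ 2) + 2) * d)
    have e1 : ∀ E : KSet n k → Bool, ∑ a, ∑ j, Wmat E a j * (if a = i then (1 : ℝ) else 0) = ∑ j, Wmat E i j := by
      intro E
      have := row_sum (Wmat E) (fun _ => 1) i
      simpa using this
    simp only [e1] at ht
    refine ht.trans (Real.exp_le_exp.2 (le_of_eq ?_))
    have e2 : ∑ a : Fin n, ∑ j : Fin n, (if a = i then (1 : ℝ) else 0) = n := by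
      rw [Finset.sum_comm]; simp
    rw [e2]
    field_simp
    ring
  have h3 := prB_exists h0 h1 (univ : Finset (Fin n))
    (fun i E => (C1 * Real.exp ((k : ℝ) ^ 2) + 2) * d ≤ ∑ j, Wmat E i j)
  simp only [Finset.mem_univ, true_and] at h3
  refine h3.trans ((Finset.sum_le_sum fun i _ => h2 i).trans (le_of_eq ?_))
  rw [Finset.sum_const, Finset.card_univ, Fintype.card_fin, nsmul_eq_mul, ← hd, ← Real.exp_add]
  congr 1; ring

lemma bad_sparse {n k : ℕ} {P : KSet n k → ℝ} (h0 : ∀ e, 0 ≤ P e) (h1 : ∀ e, P e ≤ 1)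
    {C1 CA η d : ℝ} (hn : (0 : ℝ) < n) (hd : Real.exp d = n) (hd0 : 0 < d) (hη : 0 < η)
    (hC1 : 0 ≤ C1)
    (hρ : ∀ i j, EWm P i j ≤ C1 * d / n)
    (hbig : 4 / η * Real.exp (4 / η * (k : ℝ) ^ 2) * C1 * CA ≤ d) :
    prB P (fun E => ∃ T : Finset (Fin n), T.Nonempty ∧ (T.card : ℝ) * d ≤ CA * n ∧
        η * d * T.card ≤ ∑ i ∈ T, ∑ j ∈ T, Wmat E i j)
      ≤ Real.exp (Real.exp (-(2 * d))) - 1 := by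
  set θ := 4 / η with hθ
  have hθ0 : 0 < θ := by positivity
  have hθη : θ * η = 4 := by rw [hθ]; field_simp
  set S : Finset (Finset (Fin n)) := univ.filter
    (fun T => T.Nonempty ∧ (T.card : ℝ) * d ≤ CA * n) with hS
  have h2 : ∀ T ∈ S, prB P (fun E => η * d * T.card ≤ ∑ i ∈ T, ∑ j ∈ T, Wmat E i j)
      ≤ Real.exp (-(3 * d)) ^ T.card := by
    intro T hT
    obtain ⟨-, hTc⟩ := (Finset.mem_filter.1 hT).2
    have ht := tail_nonneg h0 h1 hρ (F := fun a j => if a ∈ T ∧ j ∈ T then (1 : ℝ) else 0)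
      (fun a j => by split_ifs <;> norm_num)
      (fun a j => by split_ifs <;> norm_num)
      hθ0 (η * d * T.card)
    have e1 : ∀ M : Fin n → Fin n → ℝ, ∑ a, ∑ j, M a j * (if a ∈ T ∧ j ∈ T then (1 : ℝ) else 0)
        = ∑ i ∈ T, ∑ j ∈ T, M i j := by
      intro M
      have h3 : (univ.filter fun i => i ∈ T) = T := by ext; simp
      have : ∀ a, ∑ j, M a j * (if a ∈ T ∧ j ∈ T then (1 : ℝ) else 0)
          = if a ∈ T then ∑ j ∈ T, M a j else 0 := by
        intro a
        by_cases ha : a ∈ T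
        · simp only [ha, true_and, if_true, mul_ite, mul_one, mul_zero]
          rw [← Finset.sum_filter, h3]
        · simp [ha]
      simp only [this]
      rw [← Finset.sum_filter, h3]
    have e1' : ∀ E : KSet n k → Bool, ∑ a, ∑ j, Wmat E a j * (if a ∈ T ∧ j ∈ T then (1 : ℝ) else 0)
        = ∑ i ∈ T, ∑ j ∈ T, Wmat E i j := fun E : KSet n k → Bool => e1 (Wmat E)
    simp only [e1'] at ht
    refine ht.trans ?_
    rw [← Real.exp_nat_mul]
    refine Real.exp_le_exp.2 ?_
    have e2 : ∑ a : Fin n, ∑ j : Fin n, (if a ∈ T ∧ j ∈ T then (1 : ℝ) else 0)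
        = (T.card : ℝ) * T.card := by
      have := e1 (fun _ _ => 1)
      simpa using this
    rw [e2]
    set t : ℝ := (T.card : ℝ) with htdef
    have ht0 : 0 ≤ t := Nat.cast_nonneg _
    have e3 : C1 * d / n * (t * t) ≤ C1 * CA * t := by
      have : C1 * d / n * (t * t) = C1 * t * (t * d) / n := by ring
      rw [this, div_le_iff₀ hn]
      have := mul_le_mul_of_nonneg_left hTc (mul_nonneg hC1 ht0)
      linarith
    have e4 : θ * Real.exp (θ * (k : ℝ) ^ 2) * (C1 * d / n * (t * t))
        ≤ θ * Real.exp (θ * (k : ℝ) ^ 2) * (C1 * CA * t) :=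
      mul_le_mul_of_nonneg_left e3 (by positivity)
    have e5 : θ * Real.exp (θ * (k : ℝ) ^ 2) * (C1 * CA * t) ≤ d * t := by
      have := mul_le_mul_of_nonneg_right hbig ht0
      linarith
    have e6 : θ * (η * d * t) = 4 * (d * t) := by
      rw [← hθη]; ring
    rw [e6]
    linarith
  have h3 := prB_exists h0 h1 S (fun T E => η * d * T.card ≤ ∑ i ∈ T, ∑ j ∈ T, Wmat E i j)
  refine (prB_mono h0 h1 ?_).trans (h3.trans ((Finset.sum_le_sum h2).trans ?_))
  · rintro E ⟨T, hT1, hT2, hT3⟩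
    exact ⟨T, Finset.mem_filter.2 ⟨mem_univ _, hT1, hT2⟩, hT3⟩
  · set x := Real.exp (-(3 * d)) with hx
    have hx0 : 0 ≤ x := (Real.exp_pos _).le
    have hsub : S ⊆ (univ : Finset (Finset (Fin n))).erase ∅ := by
      intro T hT
      rw [Finset.mem_erase]
      exact ⟨((Finset.mem_filter.1 hT).2.1).ne_empty, mem_univ _⟩
    refine (Finset.sum_le_sum_of_subset_of_nonneg hsub fun T _ _ => pow_nonneg hx0 _).trans ?_
    have hall : ∑ T : Finset (Fin n), x ^ T.card = (x + 1) ^ n := by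
      have := Finset.sum_pow_mul_eq_add_pow x (1 : ℝ) (univ : Finset (Fin n))
      simpa using this
    have hsplit := Finset.add_sum_erase (univ : Finset (Finset (Fin n))) (fun T => x ^ T.card)
      (mem_univ ∅)
    rw [hall] at hsplit
    simp only [Finset.card_empty, pow_zero] at hsplit
    have hle : (x + 1) ^ n ≤ Real.exp (Real.exp (-(2 * d))) := by
      have h4 : (x + 1) ^ n ≤ Real.exp x ^ n :=
        pow_le_pow_left₀ (by linarith) (Real.add_one_le_exp x) n
      refine h4.trans (le_of_eq ?_)
      rw [← Real.exp_nat_mul]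
      congr 1
      rw [← hd, hx, ← Real.exp_add]
      congr 1; ring
    linarith

lemma geom_int (N : ℕ) : ∑ z ∈ Finset.Icc (-(N : ℤ)) N, ((1 : ℝ) / 2) ^ z.natAbs ≤ 3 := by
  have h : ∀ N : ℕ, ∑ z ∈ Finset.Icc (-(N : ℤ)) N, ((1 : ℝ) / 2) ^ z.natAbs
      = 3 - 2 * (1 / 2) ^ N := by
    intro N
    induction N with
    | zero => simp; norm_num
    | succ N ih =>
      have hs : Finset.Icc (-((N + 1 : ℕ) : ℤ)) ((N + 1 : ℕ) : ℤ)
          = insert (-((N + 1 : ℕ) : ℤ)) (insert ((N + 1 : ℕ) : ℤ) (Finset.Icc (-(N : ℤ)) N)) := by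
        ext z
        simp only [Finset.mem_Icc, Finset.mem_insert]
        omega
      rw [hs, Finset.sum_insert, Finset.sum_insert, ih]
      · rw [Int.natAbs_neg, Int.natAbs_natCast, pow_succ]
        ring
      · simp only [Finset.mem_Icc]; omega
      · simp only [Finset.mem_Icc, Finset.mem_insert]; omega
  rw [h]
  have : (0 : ℝ) ≤ (1 / 2) ^ N := by positivity
  linarith

/-- The integer vectors with squared norm at most `4 n`. -/
noncomputable def netZ (n : ℕ) : Finset (Fin n → ℤ) :=
  (Fintype.piFinset fun _ : Fin n => Finset.Icc (-((4 * n : ℕ) : ℤ)) ((4 * n : ℕ) : ℤ)).filter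
    fun z => ∑ i, (z i : ℝ) ^ 2 ≤ 4 * n

lemma mem_netZ {n : ℕ} (z : Fin n → ℤ) (hz : ∑ i, (z i : ℝ) ^ 2 ≤ 4 * n) : z ∈ netZ n := by
  unfold netZ
  rw [Finset.mem_filter]
  refine ⟨?_, hz⟩
  rw [Fintype.mem_piFinset]
  intro i
  have h1 : (z i : ℝ) ^ 2 ≤ 4 * n :=
    (Finset.single_le_sum (f := fun i => (z i : ℝ) ^ 2) (fun i _ => sq_nonneg _) (mem_univ i)).trans hz
  have h2 : (z i) ^ 2 ≤ 4 * (n : ℤ) := by exact_mod_cast h1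
  rw [Finset.mem_Icc]
  push_cast
  constructor
  · nlinarith [sq_nonneg (z i + 1), Int.le_self_sq (-(z i))]
  · nlinarith [Int.le_self_sq (z i)]

lemma netZ_card (n : ℕ) : ((netZ n).card : ℝ) ≤ Real.exp (4 * n) := by
  have h1 : ∀ z ∈ netZ n, (1 : ℝ) ≤ 16 ^ n * ∏ i, ((1 : ℝ) / 2) ^ (z i).natAbs := by
    intro z hz
    have hz2 := (Finset.mem_filter.1 hz).2
    rw [Finset.prod_pow_eq_pow_sum]
    have hs : ∑ i, (z i).natAbs ≤ 4 * n := by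
      have : ((∑ i, (z i).natAbs : ℕ) : ℝ) ≤ 4 * n := by
        refine le_trans ?_ hz2
        push_cast
        refine Finset.sum_le_sum fun i _ => ?_
        rw [Nat.cast_natAbs]
        have : |z i| ≤ (z i) ^ 2 := by
          rw [← sq_abs]; exact Int.le_self_sq _
        exact_mod_cast this
      exact_mod_cast this
    have h2 : ((1 : ℝ) / 2) ^ (4 * n) ≤ (1 / 2) ^ (∑ i, (z i).natAbs) :=
      pow_le_pow_of_le_one (by norm_num) (by norm_num) hs
    have h3 : (16 : ℝ) ^ n * (1 / 2) ^ (4 * n) = 1 := by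
      rw [pow_mul, ← mul_pow]; norm_num
    have := mul_le_mul_of_nonneg_left h2 (show (0 : ℝ) ≤ 16 ^ n by positivity)
    linarith
  have h2 : ((netZ n).card : ℝ) ≤ ∑ z ∈ netZ n, 16 ^ n * ∏ i, ((1 : ℝ) / 2) ^ (z i).natAbs := by
    have := Finset.card_nsmul_le_sum (netZ n) _ _ h1
    simpa using this
  refine h2.trans ?_
  have h3 : ∑ z ∈ netZ n, 16 ^ n * ∏ i, ((1 : ℝ) / 2) ^ (z i).natAbs
      ≤ ∑ z ∈ Fintype.piFinset fun _ : Fin n =>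
          Finset.Icc (-((4 * n : ℕ) : ℤ)) ((4 * n : ℕ) : ℤ),
        16 ^ n * ∏ i, ((1 : ℝ) / 2) ^ (z i).natAbs := by
    refine Finset.sum_le_sum_of_subset_of_nonneg (Finset.filter_subset _ _) fun z _ _ => ?_
    positivity
  refine h3.trans ?_
  rw [← Finset.mul_sum, ← Finset.prod_univ_sum (fun _ : Fin n =>
          Finset.Icc (-((4 * n : ℕ) : ℤ)) ((4 * n : ℕ) : ℤ)) (fun _ z => ((1 : ℝ) / 2) ^ z.natAbs)]
  rw [Finset.prod_const, Finset.card_univ, Fintype.card_fin, ← mul_pow]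
  have h4 : Real.exp (4 * n) = Real.exp 4 ^ n := by rw [← Real.exp_nat_mul]; ring_nf
  rw [h4]
  have hnn : 0 ≤ ∑ z ∈ Finset.Icc (-((4 * n : ℕ) : ℤ)) ((4 * n : ℕ) : ℤ), ((1 : ℝ) / 2) ^ z.natAbs :=
    Finset.sum_nonneg fun z _ => by positivity
  refine pow_le_pow_left₀ (by positivity) ?_ n
  have h5 := geom_int (4 * n)
  have h6 : (48 : ℝ) ≤ Real.exp 4 := by
    have h7 : Real.exp 4 = Real.exp 1 ^ 4 := by rw [← Real.exp_nat_mul]; norm_num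
    rw [h7]
    have := Real.exp_one_gt_d9
    calc (48 : ℝ) ≤ 2.7 ^ 4 := by norm_num
      _ ≤ _ := pow_le_pow_left₀ (by norm_num) (by linarith) 4
  linarith

lemma bad_light {n k : ℕ} {P : KSet n k → ℝ} (h0 : ∀ e, 0 ≤ P e) (h1 : ∀ e, P e ≤ 1)
    {C1 K c ε d : ℝ} (hn : (0 : ℝ) < n) (hd0 : 0 < d) (hC1 : 0 ≤ C1) (hK : 0 < K)
    (hc : 0 < c)
    (hKε : K * ε = 6) (hKc : K * (k : ℝ) ^ 2 * c ≤ 1)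
    (hρ : ∀ i j, EWm P i j ≤ C1 * d / n)
    (hbig : 16 * K ^ 2 * (k : ℝ) ^ 2 * C1 ≤ d) :
    prB P (fun E => ∃ z : Fin n → ℤ, ∑ i, (z i : ℝ) ^ 2 ≤ 4 * n ∧
        ε * n * d ≤ ∑ i, ∑ j, (Wmat E i j - EWm P i j) *
          (if |(z i : ℝ) * z j| ≤ c * d then (z i : ℝ) * z j else 0))
      ≤ Real.exp (-n) := by
  have h2 : ∀ z ∈ netZ n, prB P (fun E => ε * n * d ≤ ∑ i, ∑ j, (Wmat E i j - EWm P i j) *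
          (if |(z i : ℝ) * z j| ≤ c * d then (z i : ℝ) * z j else 0)) ≤ Real.exp (-(5 * n)) := by
    intro z hz
    have hz2 := (Finset.mem_filter.1 hz).2
    have hcd : 0 < c * d := by positivity
    have ht := tail_light h0 h1 hρ
      (F := fun i j => if |(z i : ℝ) * z j| ≤ c * d then (z i : ℝ) * z j else 0) (T := c * d)
      (fun i j => by
        split_ifs with h
        · exact h
        · simpa using hcd.le)
      (θ := K / d) (by positivity)
      (by
        have : K / d * ((k : ℝ) ^ 2 * (c * d)) = K * (k : ℝ) ^ 2 * c := by field_simp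
        rw [this]; exact hKc)
      (ε * n * d)
    refine ht.trans (Real.exp_le_exp.2 ?_)
    have hs : ∑ i, ∑ j, (if |(z i : ℝ) * z j| ≤ c * d then (z i : ℝ) * z j else 0) ^ 2
        ≤ 16 * (n : ℝ) ^ 2 := by
      have e1 : ∑ i, ∑ j, (if |(z i : ℝ) * z j| ≤ c * d then (z i : ℝ) * z j else 0) ^ 2
          ≤ ∑ i, ∑ j, (z i : ℝ) ^ 2 * (z j : ℝ) ^ 2 := by
        refine Finset.sum_le_sum fun i _ => Finset.sum_le_sum fun j _ => ?_
        split_ifs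
        · rw [mul_pow]
        · have : 0 ≤ (z i : ℝ) ^ 2 * (z j : ℝ) ^ 2 := by positivity
          simpa using this
      refine e1.trans ?_
      rw [← Finset.sum_mul_sum]
      have e0 : 0 ≤ ∑ i, (z i : ℝ) ^ 2 := Finset.sum_nonneg fun i _ => sq_nonneg _
      nlinarith
    have e2 : (K / d) ^ 2 * (k : ℝ) ^ 2 * (C1 * d / n *
        ∑ i, ∑ j, (if |(z i : ℝ) * z j| ≤ c * d then (z i : ℝ) * z j else 0) ^ 2)
        ≤ (K / d) ^ 2 * (k : ℝ) ^ 2 * (C1 * d / n * (16 * (n : ℝ) ^ 2)) := by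
      refine mul_le_mul_of_nonneg_left (mul_le_mul_of_nonneg_left hs (by positivity)) (by positivity)
    have e3 : (K / d) ^ 2 * (k : ℝ) ^ 2 * (C1 * d / n * (16 * (n : ℝ) ^ 2))
        = (16 * K ^ 2 * (k : ℝ) ^ 2 * C1) / d * n := by
      field_simp
    have e4 : (16 * K ^ 2 * (k : ℝ) ^ 2 * C1) / d * n ≤ 1 * n :=
      mul_le_mul_of_nonneg_right ((div_le_one hd0).2 hbig) hn.le
    have e5 : K / d * (ε * n * d) = 6 * n := by
      rw [← hKε]; field_simp
    rw [e5]
    linarith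
  have h3 := prB_exists h0 h1 (netZ n) (fun z E => ε * n * d ≤ ∑ i, ∑ j, (Wmat E i j - EWm P i j) *
          (if |(z i : ℝ) * z j| ≤ c * d then (z i : ℝ) * z j else 0))
  refine (prB_mono h0 h1 ?_).trans (h3.trans ((Finset.sum_le_sum h2).trans ?_))
  · rintro E ⟨z, hz1, hz2⟩
    exact ⟨z, mem_netZ z hz1, hz2⟩
  · rw [Finset.sum_const, nsmul_eq_mul]
    refine (mul_le_mul_of_nonneg_right (netZ_card n) (Real.exp_pos _).le).trans (le_of_eq ?_)
    rw [← Real.exp_add]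
    congr 1; ring

lemma bad_low {m k : ℕ} (hk : 2 ≤ k) {p q : ℝ} (hq : 0 ≤ q) (hpq : q ≤ p) (hp1 : p ≤ 1)
    (σ : Fin (2 * m) → Bool) (hb : balanced σ) {θ ε ε' d : ℝ} (hθ : 0 < θ) (hθε : θ * ε ≤ ε')
    (hd0 : 0 ≤ d) (hd : Real.exp d = ((2 * m : ℕ) : ℝ))
    (hg : q * ((2 * m * Real.cosh θ) ^ (k - 1) / ((k - 1).factorial : ℝ)
            - ((2 * m - 1).choose (k - 1) : ℕ))
        + (p - q) * (((m - 1).choose (k - 1) : ℕ) * (Real.exp (-(θ * (k - 1 : ℕ))) - 1))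
        ≤ -(1 + 2 * ε') * d) :
    prB (fun e : KSet (2 * m) k => edgeP p q σ e.1)
      (fun E => ∃ i, ∑ j, Wmat E i j * (sgn σ i * sgn σ j) ≤ ε * d) ≤ Real.exp (-(ε' * d)) := by
  have h0 : ∀ e : KSet (2 * m) k, 0 ≤ edgeP p q σ e.1 := by
    intro e; unfold edgeP; split_ifs <;> linarith
  have h1 : ∀ e : KSet (2 * m) k, edgeP p q σ e.1 ≤ 1 := by
    intro e; unfold edgeP; split_ifs <;> linarith
  have h2 : ∀ i, prB (fun e : KSet (2 * m) k => edgeP p q σ e.1)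
      (fun E => ∑ j, Wmat E i j * (sgn σ i * sgn σ j) ≤ ε * d) ≤ Real.exp (-(d + ε' * d)) := by
    intro i
    refine (prB_mono h0 h1 ?_).trans ((chern h0 h1 (fun e => -θ *
      SF (fun a j => if a = i then sgn σ i * sgn σ j else 0) e.1) (-θ * (ε * d))).trans ?_)
    · intro E hE
      have e1 := row_sum (Wmat E) (fun j => sgn σ i * sgn σ j) i
      rw [← e1, W_sum] at hE
      have := mul_le_mul_of_nonpos_left hE (neg_nonpos.2 hθ.le)
      refine this.trans (le_of_eq ?_)
      rw [Finset.mul_sum]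
      refine Finset.sum_congr rfl fun e _ => ?_
      split_ifs <;> simp
    · refine Real.exp_le_exp.2 ?_
      have := mgf_deg hk (p := p) hq σ hb i θ
      have h5 := mul_le_mul_of_nonneg_right hθε hd0
      linarith
  have h3 := prB_exists h0 h1 (univ : Finset (Fin (2 * m)))
    (fun i E => ∑ j, Wmat E i j * (sgn σ i * sgn σ j) ≤ ε * d)
  simp only [Finset.mem_univ, true_and] at h3
  refine h3.trans ((Finset.sum_le_sum fun i _ => h2 i).trans (le_of_eq ?_))
  rw [Finset.sum_const, Finset.card_univ, Fintype.card_fin, nsmul_eq_mul, ← hd, ← Real.exp_add]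
  congr 1; ring


/-! ### Assembling the estimates -/

set_option maxHeartbeats 800000 in
lemma fail_bound {m k : ℕ} (hk : 2 ≤ k) (hm : 0 < m) {p q : ℝ} (hq : 0 ≤ q) (hpq : q ≤ p)
    (hp1 : p ≤ 1)
    (σ : Fin (2 * m) → Bool) (hb : balanced σ) {θ ε ε' d C1 ε₃ Cdeg δ η K c CA : ℝ}
    (hθ : 0 < θ) (hε : 0 < ε) (hθε : θ * ε ≤ ε')
    (hd0 : 0 < d) (hd : Real.exp d = ((2 * m : ℕ) : ℝ)) (hC1 : 0 ≤ C1)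
    (hρ : p * ((2 * m - 2).choose (k - 2) : ℕ) ≤ C1 * d / ((2 * m : ℕ) : ℝ))
    (hg : q * ((2 * m * Real.cosh θ) ^ (k - 1) / ((k - 1).factorial : ℝ)
            - ((2 * m - 1).choose (k - 1) : ℕ))
        + (p - q) * (((m - 1).choose (k - 1) : ℕ) * (Real.exp (-(θ * (k - 1 : ℕ))) - 1))
        ≤ -(1 + 2 * ε') * d)
    (hε₃ : ε₃ * 8 = ε) (hCdeg : Cdeg = C1 * Real.exp ((k : ℝ) ^ 2) + 2)
    (hδ : 0 < δ) (hδe : 8 * δ * Cdeg = ε₃) (hη : 0 < η) (hηe : 4 * η = δ * ε₃)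
    (hK : 0 < K) (hKε : K * ε₃ = 6) (hc : 0 < c) (hKc : K * (k : ℝ) ^ 2 * c ≤ 1)
    (hCA : CA * (c * δ) = 4)
    (hb1 : 4 / η * Real.exp (4 / η * (k : ℝ) ^ 2) * C1 * CA ≤ d)
    (hb2 : 16 * K ^ 2 * (k : ℝ) ^ 2 * C1 ≤ d)
    (hb3 : 16 * C1 ≤ ε₃ * d * c) :
    prB (fun e : KSet (2 * m) k => edgeP p q σ e.1)
      (fun E => ¬ sdpUniqueOpt (Wmat E) (outer σ))
      ≤ Real.exp (-(ε' * d)) + (Real.exp (-d) + ((Real.exp (Real.exp (-(2 * d))) - 1)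
        + Real.exp (-((2 * m : ℕ) : ℝ)))) := by
  have h0 : ∀ e : KSet (2 * m) k, 0 ≤ edgeP p q σ e.1 := by
    intro e; unfold edgeP; split_ifs <;> linarith
  have h1 : ∀ e : KSet (2 * m) k, edgeP p q σ e.1 ≤ 1 := by
    intro e; unfold edgeP; split_ifs <;> linarith
  have hn : (0 : ℝ) < ((2 * m : ℕ) : ℝ) := by
    have : 0 < 2 * m := by omega
    exact_mod_cast this
  have hρ' : ∀ i j, EWm (fun e : KSet (2 * m) k => edgeP p q σ e.1) i j
      ≤ C1 * d / ((2 * m : ℕ) : ℝ) :=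
    fun i j => (EW_le hk hq hpq σ hb i j).trans hρ
  have b1 := bad_low hk hq hpq hp1 σ hb hθ hθε hd0.le hd hg
  have b2 := bad_deg h0 h1 hn hd hρ'
  have b3 := bad_sparse h0 h1 hn hd hd0 hη hC1 hρ' hb1
  have b4 := bad_light h0 h1 hn hd0 hC1 hK hc hKε hKc hρ' hb2
  refine le_trans (prB_mono h0 h1 ?_) (le_trans (prB_or h0 h1 _ _)
    (add_le_add b1 (le_trans (prB_or h0 h1 _ _)
    (add_le_add b2 (le_trans (prB_or h0 h1 _ _) (add_le_add b3 b4))))))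
  intro E
  contrapose!
  rintro ⟨g1, g2, g3, g4⟩
  have hn' : 0 < 2 * m := by omega
  refine sdp_det hn' σ (sgn_sum σ hb) (Wmat E) (Wmat_symm E) (ε₁ := ε * d) (ε₂ := ε / 2 * d)
    (by nlinarith [mul_pos hε hd0]) (fun i => (g1 i).le) ?_
  intro w hw1 hw2
  have hEW := EW_quad_nonpos hk hq hpq σ hb w hw1 hw2
  have key := quad_int_to_real hn'
    (fun i j => Wmat E i j - EWm (fun e : KSet (2 * m) k => edgeP p q σ e.1) i j)
    (fun i => by simp [Wmat, EWm]) (ε / 2 * d) ?_ w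
  · have e1 : ∑ i, ∑ j, (Wmat E i j - EWm (fun e : KSet (2 * m) k => edgeP p q σ e.1) i j)
        * (w i * w j) = ∑ i, ∑ j, Wmat E i j * (w i * w j)
        - ∑ i, ∑ j, EWm (fun e : KSet (2 * m) k => edgeP p q σ e.1) i j * (w i * w j) := by
      simp only [sub_mul, Finset.sum_sub_distrib]
    linarith
  · intro z hz
    have hCd0 : 0 ≤ Cdeg := by rw [hCdeg]; positivity
    have hq' := quad_bound (fun i j => Wmat E i j)
      (fun i j => EWm (fun e : KSet (2 * m) k => edgeP p q σ e.1) i j)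
      (Wmat_nonneg E) (Wmat_symm E) (EWm_nonneg h0) hρ'
      (by positivity) z (R := 4 * ((2 * m : ℕ) : ℝ)) (T := c * d) (δ := δ) (Dg := Cdeg * d)
      (η := η * d) (L := ε₃ * ((2 * m : ℕ) : ℝ) * d) (by positivity) hδ (by positivity)
      (by positivity) hz (fun i => by rw [hCdeg]; exact (g2 i).le) ?_ (g4 z hz).le
    · refine hq'.trans ?_
      set N : ℝ := ((2 * m : ℕ) : ℝ) with hN
      have t1 : 2 * δ * (Cdeg * d) * (4 * N) = ε₃ * N * d := by rw [← hδe]; ring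
      have t2 : δ⁻¹ * (η * d) * (4 * N) = ε₃ * N * d := by
        have : δ⁻¹ * (4 * η) = ε₃ := by rw [hηe]; field_simp
        rw [← this]; ring
      have t3 : C1 * d / N * (4 * N) ^ 2 / (c * d) ≤ ε₃ * N * d := by
        rw [div_le_iff₀ (by positivity)]
        have : C1 * d / N * (4 * N) ^ 2 = 16 * C1 * (d * N) := by field_simp; ring
        rw [this]
        have := mul_le_mul_of_nonneg_right hb3 (mul_pos hd0 hn).le
        exact this.trans_eq (by ring)
      rw [t1, t2]
      have : ε / 2 * d * N = 4 * (ε₃ * N * d) := by rw [← hε₃]; ring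
      linarith
    · intro A hA
      rcases A.eq_empty_or_nonempty with rfl | hne
      · simp
      · refine (g3 A hne ?_).le
        have hcd : 0 < c * δ := by positivity
        have : (A.card : ℝ) * d * (c * δ) ≤ CA * ((2 * m : ℕ) : ℝ) * (c * δ) := by
          calc _ = (A.card : ℝ) * (c * d * δ) := by ring
            _ ≤ _ := hA
            _ = CA * (c * δ) * ((2 * m : ℕ) : ℝ) := by rw [hCA]
            _ = _ := by ring
        exact le_of_mul_le_mul_right this hcd

lemma exp_neg_quad {u : ℝ} (hu : 0 ≤ u) : Real.exp (-u) ≤ 1 - u + u ^ 2 / 2 := by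
  have h := Real.quadratic_le_exp_of_nonneg hu
  have h2 : Real.exp u * Real.exp (-u) = 1 := by rw [← Real.exp_add]; simp
  have h3 : 0 < 1 - u + u ^ 2 / 2 := by nlinarith [sq_nonneg (u - 1)]
  have h4 : 1 ≤ Real.exp u * (1 - u + u ^ 2 / 2) := by
    have := mul_le_mul_of_nonneg_right h h3.le
    nlinarith [sq_nonneg (u ^ 2)]
  have hp := Real.exp_pos u
  nlinarith

lemma calc_rate (κ : ℕ) (hκ : 1 ≤ κ) {x β : ℝ} (hx : 0 < x) (hβ : 0 < β)
    (h : ((κ : ℝ) + 1) * x + β < κ * x ^ 2) :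
    β * (Real.cosh (1 / (κ * x)) ^ κ - 1)
      - 2 * x * (1 - Real.exp (-(1 / (κ * x) * κ))) < -1 := by
  have hκ' : (1 : ℝ) ≤ κ := by exact_mod_cast hκ
  have hκ0 : (0 : ℝ) < κ := by linarith
  have e0 : 1 / (κ * x) * κ = 1 / x := by field_simp
  rw [e0]
  set y := 1 / x with hy
  have hy0 : 0 < y := by positivity
  have hxy : x * y = 1 := by rw [hy]; field_simp
  have hy1 : ((κ : ℝ) + 1) * y < κ := by
    have h2 : ((κ : ℝ) + 1) * x < κ * x ^ 2 := by linarith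
    have h3 : ((κ : ℝ) + 1) < κ * x := by
      by_contra hcon
      push Not at hcon
      nlinarith
    have := mul_lt_mul_of_pos_right h3 hy0
    nlinarith
  have hy2 : y < 1 := by nlinarith
  have h1 := exp_neg_quad hy0.le
  have h2 : 2 - y ≤ 2 * x * (1 - Real.exp (-y)) := by
    have := mul_le_mul_of_nonneg_left h1 (by positivity : (0 : ℝ) ≤ 2 * x)
    have e : 2 * x * (1 - y + y ^ 2 / 2) = 2 * x - 2 * (x * y) + (x * y) * y := by ring
    rw [e, hxy] at this
    linarith
  have e1 : 1 / (κ * x) = y / κ := by rw [hy]; field_simp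
  rw [e1]
  set v := y ^ 2 / (2 * κ) with hv
  have hv0 : 0 < v := by positivity
  have hv1 : v < 1 := by
    rw [hv, div_lt_one (by positivity)]; nlinarith
  have h3 : Real.cosh (y / κ) ^ κ ≤ 1 + v + v ^ 2 := by
    have a1 : Real.cosh (y / κ) ^ κ ≤ Real.exp ((y / κ) ^ 2 / 2) ^ κ :=
      pow_le_pow_left₀ (Real.cosh_pos _).le (Real.cosh_le_exp_half_sq _) _
    have a2 : Real.exp ((y / κ) ^ 2 / 2) ^ κ = Real.exp v := by
      rw [← Real.exp_nat_mul]; congr 1; rw [hv]; field_simp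
    have a3 := Real.abs_exp_sub_one_sub_id_le (x := v) (by rw [abs_of_pos hv0]; exact hv1.le)
    have a4 := (abs_le.1 a3).2
    linarith [a1.trans_eq a2]
  have h4 : β * (Real.cosh (y / κ) ^ κ - 1) ≤ β * (v * (1 + v)) :=
    mul_le_mul_of_nonneg_left (by nlinarith) hβ.le
  have h5 : β * v ≤ 1 / 2 * (1 - y) := by
    have b1 : β ≤ κ * x ^ 2 - (κ + 1) * x := by linarith
    have b2 := mul_le_mul_of_nonneg_right b1 hv0.le
    have b3 : (κ * x ^ 2 - (κ + 1) * x) * v = 1 / 2 * ((x * y) ^ 2 - (x * y) * (y + y / κ)) := by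
      rw [hv]; field_simp
    rw [b3, hxy] at b2
    have : 0 ≤ y / κ := by positivity
    nlinarith
  have h6 : β * (v * (1 + v)) ≤ 1 / 2 * (1 - y) * (1 + v) := by
    have := mul_le_mul_of_nonneg_right h5 (by linarith : 0 ≤ 1 + v)
    linarith
  nlinarith


lemma choose_lim (κ c : ℕ) (hc : 1 ≤ c) :
    Tendsto (fun m : ℕ => ((c * m - 1).choose κ : ℝ) / (m : ℝ) ^ κ) atTop
      (nhds ((c : ℝ) ^ κ / (κ.factorial : ℝ))) := by
  have hT : Tendsto (fun m : ℕ => c * m - 1) atTop atTop := by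
    refine tendsto_atTop.2 fun b => ?_
    filter_upwards [eventually_ge_atTop (b + 1)] with m hm
    have : m ≤ c * m := Nat.le_mul_of_pos_left m hc
    omega
  have h1 := (isEquivalent_choose κ).comp_tendsto hT
  have hlim : Tendsto (fun m : ℕ => (((c * m - 1 : ℕ) : ℝ)) / m) atTop (nhds c) := by
    have h2 : Tendsto (fun m : ℕ => (c : ℝ) - 1 / (m : ℝ)) atTop (nhds ((c : ℝ) - 0)) :=
      tendsto_const_nhds.sub tendsto_one_div_atTop_nhds_zero_nat
    rw [sub_zero] at h2
    refine h2.congr' ?_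
    filter_upwards [eventually_ge_atTop 1] with m hm
    have : 1 ≤ c * m := Nat.mul_pos hc hm
    push_cast [Nat.cast_sub this]
    have : (m : ℝ) ≠ 0 := by positivity
    field_simp
  have h3 := (h1.div (Asymptotics.IsEquivalent.refl (u := fun m : ℕ => (m : ℝ) ^ κ)))
  have h4 : Tendsto ((fun m : ℕ => ((((c * m - 1 : ℕ) : ℝ)) ^ κ / (κ.factorial : ℝ)) / (m : ℝ) ^ κ))
      atTop (nhds ((c : ℝ) ^ κ / (κ.factorial : ℝ))) := by
    refine ((hlim.pow κ).div_const _).congr fun m => ?_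
    rw [div_pow]; ring
  exact h3.symm.tendsto_nhds h4

lemma rate_lim (κ : ℕ) (α β Ch ex : ℝ) :
    Tendsto (fun m : ℕ => β * (((2 * m * Ch) ^ κ / (κ.factorial : ℝ)) / ((2 * m - 1).choose κ : ℕ) - 1)
      + (α - β) * ((((m - 1).choose κ : ℕ) : ℝ) / ((2 * m - 1).choose κ : ℕ) * (ex - 1))) atTop
      (nhds (β * (Ch ^ κ - 1) - (α - β) / 2 ^ κ * (1 - ex))) := by
  have h1 := choose_lim κ 1 le_rfl
  have h2 := choose_lim κ 2 (by norm_num)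
  have hf : (κ.factorial : ℝ) ≠ 0 := by positivity
  have hne : (((2 : ℕ) : ℝ) ^ κ / (κ.factorial : ℝ)) ≠ 0 := by positivity
  have r : Tendsto (fun m : ℕ => ((2 * m * Ch) ^ κ / (κ.factorial : ℝ)) / ((2 * m - 1).choose κ : ℕ))
      atTop (nhds (Ch ^ κ)) := by
    have := (tendsto_const_nhds (x := (2 * Ch) ^ κ / (κ.factorial : ℝ))).div h2 hne
    have e : (2 * Ch) ^ κ / (κ.factorial : ℝ) / (((2 : ℕ) : ℝ) ^ κ / (κ.factorial : ℝ)) = Ch ^ κ := by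
      rw [mul_pow]; push_cast; field_simp
    rw [e] at this
    refine this.congr' ?_
    filter_upwards [eventually_ge_atTop 1] with m hm
    have hm0 : (m : ℝ) ^ κ ≠ 0 := by positivity
    simp only [Pi.div_apply]
    rw [div_div_eq_mul_div]
    congr 1
    rw [mul_pow, mul_pow, mul_pow]; ring
  have s : Tendsto (fun m : ℕ => (((m - 1).choose κ : ℕ) : ℝ) / ((2 * m - 1).choose κ : ℕ))
      atTop (nhds (1 / 2 ^ κ)) := by
    have := h1.div h2 hne
    have e : (((1 : ℕ) : ℝ) ^ κ / (κ.factorial : ℝ)) / (((2 : ℕ) : ℝ) ^ κ / (κ.factorial : ℝ)) = 1 / 2 ^ κ := by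
      push_cast; field_simp; simp
    rw [e] at this
    refine this.congr' ?_
    filter_upwards [eventually_ge_atTop 1] with m hm
    have hm0 : (m : ℝ) ^ κ ≠ 0 := by positivity
    simp only [Pi.div_apply, one_mul]
    rw [div_div_div_cancel_right₀ hm0]
  have := ((r.sub_const 1).const_mul β).add ((s.mul_const (ex - 1)).const_mul (α - β))
  convert this using 2
  ring

lemma hI_prep (k : ℕ) (hk : 2 ≤ k) (α β : ℝ) (hβ : 0 < β) (hαβ : β < α)
    (hI : 1 < ((k : ℝ) - 1) / 2 ^ (2 * k) * (α - β) ^ 2 /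
        (((k : ℝ) / 2 ^ k) * α + (1 - (k : ℝ) / 2 ^ k) * β)) :
    (((k - 1 : ℕ) : ℝ) + 1) * ((α - β) / 2 ^ k) + β
      < ((k - 1 : ℕ) : ℝ) * ((α - β) / 2 ^ k) ^ 2 := by
  have hc : ((k - 1 : ℕ) : ℝ) = (k : ℝ) - 1 := by
    rw [Nat.cast_sub (by omega)]; simp
  rw [hc]
  have e : ((k : ℝ) / 2 ^ k) * α + (1 - (k : ℝ) / 2 ^ k) * β = k * ((α - β) / 2 ^ k) + β := by ring
  rw [e] at hI
  have hx : 0 < (α - β) / 2 ^ k := div_pos (by linarith) (by positivity)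
  rw [lt_div_iff₀ (by positivity)] at hI
  have e2 : ((k : ℝ) - 1) / 2 ^ (2 * k) * (α - β) ^ 2 = ((k : ℝ) - 1) * ((α - β) / 2 ^ k) ^ 2 := by
    rw [div_pow, ← pow_mul, mul_comm k 2]; ring
  rw [e2] at hI
  linarith

lemma pr_lower {m k : ℕ} {p q η : ℝ} (hq : 0 ≤ q) (hpq : q ≤ p) (hp1 : p ≤ 1)
    (h : ∀ σ : Fin (2 * m) → Bool, balanced σ →
      prB (fun e : KSet (2 * m) k => edgeP p q σ e.1)
        (fun E => ¬ sdpUniqueOpt (Wmat E) (outer σ)) ≤ η) :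
    1 - η ≤ prEvent (2 * m) k p q (fun σ E => sdpUniqueOpt (Wmat E) (outer σ)) ∧
      prEvent (2 * m) k p q (fun σ E => sdpUniqueOpt (Wmat E) (outer σ)) ≤ 1 := by
  have hE : prEvent (2 * m) k p q (fun σ E => sdpUniqueOpt (Wmat E) (outer σ))
      = ∑ σ : Fin (2 * m) → Bool, sigProb (2 * m) σ *
        prB (fun e : KSet (2 * m) k => edgeP p q σ e.1)
          (fun E => sdpUniqueOpt (Wmat E) (outer σ)) := by
    unfold prEvent prB
    refine Finset.sum_congr rfl fun σ _ => ?_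
    rw [Finset.mul_sum]
    refine Finset.sum_congr (by ext; simp) fun E _ => ?_
    rw [mul_assoc]
    rfl
  have hex : (Finset.univ.filter (fun τ : Fin (2 * m) → Bool => balanced τ)).Nonempty := by
    refine ⟨fun i => decide ((i : ℕ) < m), ?_⟩
    simp only [Finset.mem_filter, Finset.mem_univ, true_and, balanced, decide_eq_true_eq]
    have : (Finset.univ.filter (fun i : Fin (2 * m) => (i : ℕ) < m)).card = m := by
      rw [Fin.card_filter_val_lt]
      omega
    rw [this]
  have hc : (0 : ℝ) < ((Finset.univ.filter (fun τ : Fin (2 * m) → Bool => balanced τ)).card : ℝ) := by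
    exact_mod_cast hex.card_pos
  have hs0 : ∀ σ : Fin (2 * m) → Bool, 0 ≤ sigProb (2 * m) σ := by
    intro σ; unfold sigProb; split_ifs
    · positivity
    · exact le_rfl
  have hs1 : ∑ σ : Fin (2 * m) → Bool, sigProb (2 * m) σ = 1 := by
    unfold sigProb
    rw [← Finset.sum_filter, Finset.sum_const, nsmul_eq_mul]
    field_simp
  have h0 : ∀ (σ : Fin (2 * m) → Bool) (e : KSet (2 * m) k), 0 ≤ edgeP p q σ e.1 := by
    intro σ e; unfold edgeP; split_ifs <;> linarith
  have h1 : ∀ (σ : Fin (2 * m) → Bool) (e : KSet (2 * m) k), edgeP p q σ e.1 ≤ 1 := by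
    intro σ e; unfold edgeP; split_ifs <;> linarith
  rw [hE]
  constructor
  · calc 1 - η = ∑ σ : Fin (2 * m) → Bool, sigProb (2 * m) σ * (1 - η) := by
          rw [← Finset.sum_mul, hs1, one_mul]
      _ ≤ _ := by
          refine Finset.sum_le_sum fun σ _ => ?_
          by_cases hb : balanced σ
          · refine mul_le_mul_of_nonneg_left ?_ (hs0 σ)
            rw [prB_compl]
            linarith [h σ hb]
          · have : sigProb (2 * m) σ = 0 := by unfold sigProb; rw [if_neg hb]
            rw [this]; simp
  · calc _ ≤ ∑ σ : Fin (2 * m) → Bool, sigProb (2 * m) σ * 1 := by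
          refine Finset.sum_le_sum fun σ _ => mul_le_mul_of_nonneg_left ?_ (hs0 σ)
          rw [prB_compl]
          linarith [prB_nonneg (h0 σ) (h1 σ) (fun E => ¬ sdpUniqueOpt (Wmat E) (outer σ))]
      _ = 1 := by rw [← Finset.sum_mul, hs1, one_mul]


lemma rho_bound {m j : ℕ} (hm : j + 2 ≤ m) {α : ℝ} (hα : 0 < α) :
    pParam (j + 2) α (2 * m) * ((2 * m - 2).choose (j + 2 - 2) : ℕ)
      ≤ 2 * α * (j + 1) * Real.log ((2 * m : ℕ) : ℝ) / ((2 * m : ℕ) : ℝ) := by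
  unfold pParam
  obtain ⟨t, ht⟩ : ∃ t, 2 * m = t + 2 := ⟨2 * m - 2, by omega⟩
  have hd : 0 ≤ Real.log ((2 * m : ℕ) : ℝ) := Real.log_natCast_nonneg _
  rw [ht] at hd ⊢
  have e1 : t + 2 - 1 = t + 1 := by omega
  have e2 : t + 2 - 2 = t := by omega
  have e3 : j + 2 - 1 = j + 1 := by omega
  have e4 : j + 2 - 2 = j := by omega
  rw [e1, e2, e3, e4]
  have hch : ((t : ℝ) + 1) * (t.choose j : ℝ) = ((t + 1).choose (j + 1) : ℝ) * (j + 1) := by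
    exact_mod_cast Nat.add_one_mul_choose_eq t j
  have hpos : (0 : ℝ) < ((t + 1).choose (j + 1) : ℝ) := by
    have : 0 < (t + 1).choose (j + 1) := Nat.choose_pos (by omega)
    exact_mod_cast this
  set d := Real.log ((t + 2 : ℕ) : ℝ)
  rw [div_mul_eq_mul_div, div_le_div_iff₀ hpos (by positivity)]
  have ht0 : (0 : ℝ) ≤ t := by positivity
  have hc0 : (0 : ℝ) ≤ (t.choose j : ℝ) := by positivity
  have h2 : 2 * α * (j + 1) * d * ((t + 1).choose (j + 1) : ℝ)
      = α * d * (t.choose j : ℝ) * (2 * (t + 1)) := by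
    linear_combination (-2 * α * d) * hch
  rw [h2]
  refine mul_le_mul_of_nonneg_left ?_ (by positivity)
  push_cast
  linarith

/-- If `α > β > 0` and `I_sdp(α,β) > 1` then the SDP with input `W(ℋ)`
has `σσᵀ` as its unique optimal solution with probability `1 - o(1)`. -/
theorem sdp_recovery (k : ℕ) (hk : 2 ≤ k) (α β : ℝ) (hβ : 0 < β) (hαβ : β < α)
    (hI : 1 < ((k : ℝ) - 1) / 2 ^ (2 * k) * (α - β) ^ 2 /
        (((k : ℝ) / 2 ^ k) * α + (1 - (k : ℝ) / 2 ^ k) * β)) :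
    Tendsto (fun m : ℕ =>
        prEvent (2 * m) k (pParam k α (2 * m)) (pParam k β (2 * m))
          (fun σ E => sdpUniqueOpt (Wmat E) (outer σ)))
      atTop (nhds 1) := by
  set x := (α - β) / 2 ^ k with hxdef
  have hx : 0 < x := div_pos (by linarith) (by positivity)
  have hprep := hI_prep k hk α β hβ hαβ hI
  have hκ : 1 ≤ k - 1 := by omega
  have hκ0 : (0 : ℝ) < ((k - 1 : ℕ) : ℝ) := by
    have : 0 < k - 1 := by omega
    exact_mod_cast this
  have hrate := calc_rate (k - 1) hκ hx hβ hprep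
  set θ : ℝ := 1 / (((k - 1 : ℕ) : ℝ) * x) with hθdef
  have hθ : 0 < θ := by positivity
  have h2x : (α - β) / 2 ^ (k - 1) = 2 * x := by
    have : (2 : ℝ) ^ k = 2 ^ (k - 1) * 2 := by rw [← pow_succ]; congr 1; omega
    rw [hxdef, this]; field_simp
  have hlim := rate_lim (k - 1) α β (Real.cosh θ) (Real.exp (-(θ * (k - 1 : ℕ))))
  rw [h2x] at hlim
  obtain ⟨ε', hε', hlt⟩ : ∃ ε' : ℝ, 0 < ε' ∧
      β * (Real.cosh θ ^ (k - 1) - 1) - 2 * x * (1 - Real.exp (-(θ * (k - 1 : ℕ))))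
        < -(1 + 2 * ε') := by
    refine ⟨(-1 - (β * (Real.cosh θ ^ (k - 1) - 1)
      - 2 * x * (1 - Real.exp (-(θ * (k - 1 : ℕ)))))) / 4, by linarith, by linarith⟩
  have hevg := hlim.eventually_lt_const hlt
  have hα : 0 < α := by linarith
  -- constants
  obtain ⟨C1, hC1def⟩ : ∃ C1 : ℝ, C1 = 2 * α * ((k - 2 : ℕ) + 1) := ⟨_, rfl⟩
  have hC1 : 0 ≤ C1 := by rw [hC1def]; positivity
  obtain ⟨ε, hεdef⟩ : ∃ ε : ℝ, ε = ε' / θ := ⟨_, rfl⟩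
  have hε : 0 < ε := by rw [hεdef]; positivity
  have hθε : θ * ε ≤ ε' := by rw [hεdef]; apply le_of_eq; field_simp
  obtain ⟨ε₃, hε₃⟩ : ∃ ε₃ : ℝ, ε₃ * 8 = ε := ⟨ε / 8, by ring⟩
  have hε₃0 : 0 < ε₃ := by linarith
  obtain ⟨Cdeg, hCdeg⟩ : ∃ Cdeg : ℝ, Cdeg = C1 * Real.exp ((k : ℝ) ^ 2) + 2 := ⟨_, rfl⟩
  have hCdeg0 : 0 < Cdeg := by rw [hCdeg]; positivity
  obtain ⟨δ, hδ, hδe⟩ : ∃ δ : ℝ, 0 < δ ∧ 8 * δ * Cdeg = ε₃ :=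
    ⟨ε₃ / (8 * Cdeg), by positivity, by field_simp⟩
  obtain ⟨η, hη, hηe⟩ : ∃ η : ℝ, 0 < η ∧ 4 * η = δ * ε₃ :=
    ⟨δ * ε₃ / 4, by positivity, by ring⟩
  obtain ⟨K, hK, hKε⟩ : ∃ K : ℝ, 0 < K ∧ K * ε₃ = 6 := ⟨6 / ε₃, by positivity, by field_simp⟩
  have hk0 : (0 : ℝ) < k := by
    have : 0 < k := by omega
    exact_mod_cast this
  obtain ⟨c, hc, hKc⟩ : ∃ c : ℝ, 0 < c ∧ K * (k : ℝ) ^ 2 * c ≤ 1 :=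
    ⟨1 / (K * (k : ℝ) ^ 2), by positivity, by apply le_of_eq; field_simp⟩
  obtain ⟨CA, hCA⟩ : ∃ CA : ℝ, CA * (c * δ) = 4 := ⟨4 / (c * δ), by field_simp⟩
  -- growth of the logarithm
  have hN : Tendsto (fun m : ℕ => ((2 * m : ℕ) : ℝ)) atTop atTop :=
    tendsto_natCast_atTop_atTop.comp (tendsto_id.const_mul_atTop' (by norm_num))
  have hD : Tendsto (fun m : ℕ => Real.log ((2 * m : ℕ) : ℝ)) atTop atTop :=
    Real.tendsto_log_atTop.comp hN
  have hratio : Tendsto (fun m : ℕ => C1 * Real.log ((2 * m : ℕ) : ℝ) / ((2 * m : ℕ) : ℝ))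
      atTop (nhds 0) := by
    have h1 : Tendsto (fun y : ℝ => Real.log y / y) atTop (nhds 0) :=
      Real.isLittleO_log_id_atTop.tendsto_div_nhds_zero
    have h2 := (h1.comp hN).const_mul C1
    rw [mul_zero] at h2
    refine h2.congr fun m => ?_
    simp only [Function.comp]
    ring
  -- the error term
  have herr : Tendsto (fun m : ℕ => 1 - (Real.exp (-(ε' * Real.log ((2 * m : ℕ) : ℝ)))
      + (Real.exp (-Real.log ((2 * m : ℕ) : ℝ))
      + ((Real.exp (Real.exp (-(2 * Real.log ((2 * m : ℕ) : ℝ)))) - 1)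
        + Real.exp (-((2 * m : ℕ) : ℝ)))))) atTop (nhds 1) := by
    have a1 : Tendsto (fun m : ℕ => Real.exp (-(ε' * Real.log ((2 * m : ℕ) : ℝ)))) atTop (nhds 0) :=
      Real.tendsto_exp_neg_atTop_nhds_zero.comp (hD.const_mul_atTop hε')
    have a2 : Tendsto (fun m : ℕ => Real.exp (-Real.log ((2 * m : ℕ) : ℝ))) atTop (nhds 0) :=
      Real.tendsto_exp_neg_atTop_nhds_zero.comp hD
    have a3 : Tendsto (fun m : ℕ => Real.exp (-(2 * Real.log ((2 * m : ℕ) : ℝ)))) atTop (nhds 0) :=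
      Real.tendsto_exp_neg_atTop_nhds_zero.comp (hD.const_mul_atTop two_pos)
    have a4 : Tendsto (fun m : ℕ => Real.exp (-((2 * m : ℕ) : ℝ))) atTop (nhds 0) :=
      Real.tendsto_exp_neg_atTop_nhds_zero.comp hN
    have a5 := (Real.continuous_exp.tendsto 0).comp a3
    have := (a1.add (a2.add ((a5.sub_const 1).add a4))).const_sub 1
    simpa using this
  have hmain : ∀ᶠ m : ℕ in atTop,
      (1 - (Real.exp (-(ε' * Real.log ((2 * m : ℕ) : ℝ)))
      + (Real.exp (-Real.log ((2 * m : ℕ) : ℝ))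
      + ((Real.exp (Real.exp (-(2 * Real.log ((2 * m : ℕ) : ℝ)))) - 1)
        + Real.exp (-((2 * m : ℕ) : ℝ))))) ≤
        prEvent (2 * m) k (pParam k α (2 * m)) (pParam k β (2 * m))
          (fun σ E => sdpUniqueOpt (Wmat E) (outer σ))) ∧
        prEvent (2 * m) k (pParam k α (2 * m)) (pParam k β (2 * m))
          (fun σ E => sdpUniqueOpt (Wmat E) (outer σ)) ≤ 1 := by
    filter_upwards [hevg, eventually_ge_atTop k, hratio.eventually_lt_const one_pos,
      hD.eventually_gt_atTop 0,
      hD.eventually_ge_atTop (4 / η * Real.exp (4 / η * (k : ℝ) ^ 2) * C1 * CA),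
      hD.eventually_ge_atTop (16 * K ^ 2 * (k : ℝ) ^ 2 * C1),
      hD.eventually_ge_atTop (16 * C1 / (ε₃ * c))] with m hg hmk hr hd0 hb1 hb2 hb3
    have hm0 : 0 < m := by omega
    have hn0 : (0 : ℝ) < ((2 * m : ℕ) : ℝ) := by
      have : 0 < 2 * m := by omega
      exact_mod_cast this
    have hCpos : (0 : ℝ) < ((2 * m - 1).choose (k - 1) : ℕ) := by
      have : 0 < (2 * m - 1).choose (k - 1) := Nat.choose_pos (by omega)
      exact_mod_cast this
    have hρ : pParam k α (2 * m) * ((2 * m - 2).choose (k - 2) : ℕ)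
        ≤ C1 * Real.log ((2 * m : ℕ) : ℝ) / ((2 * m : ℕ) : ℝ) := by
      obtain ⟨j, rfl⟩ : ∃ j, k = j + 2 := ⟨k - 2, by omega⟩
      have := rho_bound (m := m) (j := j) hmk hα
      rw [hC1def]
      simpa using this
    set d := Real.log ((2 * m : ℕ) : ℝ) with hd
    have hq : 0 ≤ pParam k β (2 * m) := by
      unfold pParam; rw [← hd]; positivity
    have hpq : pParam k β (2 * m) ≤ pParam k α (2 * m) := by
      unfold pParam
      rw [← hd]
      exact div_le_div_of_nonneg_right (mul_le_mul_of_nonneg_right hαβ.le hd0.le) hCpos.le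
    have hp1 : pParam k α (2 * m) ≤ 1 := by
      have h1 : (1 : ℝ) ≤ ((2 * m - 2).choose (k - 2) : ℕ) := by
        have : 0 < (2 * m - 2).choose (k - 2) := Nat.choose_pos (by omega)
        exact_mod_cast this
      have := mul_le_mul_of_nonneg_left h1 (hq.trans hpq)
      linarith
    have hgg : pParam k β (2 * m) * ((2 * m * Real.cosh θ) ^ (k - 1) / ((k - 1).factorial : ℝ)
            - ((2 * m - 1).choose (k - 1) : ℕ))
        + (pParam k α (2 * m) - pParam k β (2 * m)) *
          (((m - 1).choose (k - 1) : ℕ) * (Real.exp (-(θ * (k - 1 : ℕ))) - 1))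
        ≤ -(1 + 2 * ε') * d := by
      have h1 := mul_le_mul_of_nonneg_right hg.le hd0.le
      refine le_trans (le_of_eq ?_) h1
      unfold pParam
      rw [← hd]
      field_simp
    refine pr_lower hq hpq hp1 fun σ hb => ?_
    refine fail_bound hk hm0 hq hpq hp1 σ hb hθ hε hθε hd0 ?_ hC1 hρ hgg hε₃ hCdeg hδ hδe hη hηe
      hK hKε hc hKc hCA hb1 hb2 ?_
    · rw [hd, Real.exp_log hn0]
    · rw [div_le_iff₀ (by positivity)] at hb3
      linarith
  exact tendsto_of_tendsto_of_tendsto_of_le_of_le' herr tendsto_const_nhds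
    (hmain.mono fun m h => h.1) (hmain.mono fun m h => h.2)
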